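/- arXiv:2206.02190 — 2 statements merged into one kernel-verified Lean document; each statement's English description precedes it below -/
import Mathlib

section
/- Let n ≥ 1 be an integer, r ≥ 1, ε ∈ (0,1), α, β real numbers and A > 0. There exist constants C > 0, c₀ > 0 and k₀ (depending only on n, r, ε, α, β, A) such that for every integer k ≥ k₀, every (α,β,A)-admissible function p : Λ_n → [0,∞), and every r-reduced n×n matrix Y: q_k(Y) ≤ C·[ (k^n/det(Y))^{(n+1)/2 − β} · k^{n/4 + α} + exp(−c₀ k^{ε}) · det(Y)^{−(n+1)/2} ]. -/
open scoped Real ENNReal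

/-- `Λ_n`: real symmetric positive definite `n × n` matrices with integral diagonal
entries such that `2T` has integer entries (half-integral matrices). -/
def IsHalfIntegral {n : ℕ} (T : Matrix (Fin n) (Fin n) ℝ) : Prop :=
  T.PosDef ∧ (∀ i, ∃ z : ℤ, T i i = z) ∧ (∀ i j, ∃ z : ℤ, 2 * T i j = z)

abbrev Lambda (n : ℕ) := {T : Matrix (Fin n) (Fin n) ℝ // IsHalfIntegral T}

/-- The Loewner order: `A ≤ B` iff `B - A` is positive semidefinite. -/
def LoewnerLE {n : ℕ} (A B : Matrix (Fin n) (Fin n) ℝ) : Prop := (B - A).PosSemidef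

/-- The diagonal part `Y_D` of a matrix `Y`. -/
def diagPart {n : ℕ} (Y : Matrix (Fin n) (Fin n) ℝ) : Matrix (Fin n) (Fin n) ℝ :=
  Matrix.diagonal fun i => Y i i

/-- `Y` is `r`-reduced: positive definite with `Y_D / r ≤ Y ≤ r • Y_D` in the
Loewner order. -/
def MinkReduced {n : ℕ} (r : ℝ) (Y : Matrix (Fin n) (Fin n) ℝ) : Prop :=
  Y.PosDef ∧ LoewnerLE (r⁻¹ • diagPart Y) Y ∧ LoewnerLE Y (r • diagPart Y)

/-- `p : Λ_n → [0,∞)` is `(α,β,A)`-admissible for weight `k`: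
`p(T)^{1/2} ≤ A · (4π)^{nk/2} · k^α · det(T)^{k/2−β} / Γ(k)^{n/2}`. -/
def Admissible (n k : ℕ) (α β A : ℝ) (p : Lambda n → ℝ) : Prop :=
  (∀ T, 0 ≤ p T) ∧
  ∀ T : Lambda n, Real.sqrt (p T) ≤
    A * (4 * π) ^ ((n * k : ℝ) / 2) * (k : ℝ) ^ α *
      (T.1.det) ^ ((k : ℝ) / 2 - β) / Real.Gamma k ^ ((n : ℝ) / 2)

/-- `q_k(Y) = ∑_{T ∈ Λ_n} p(T)^{1/2} · det(Y)^{k/2} · exp(−2π tr(TY))`,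
as a sum in `[0,∞]`. -/
noncomputable def qk (n k : ℕ) (p : Lambda n → ℝ)
    (Y : Matrix (Fin n) (Fin n) ℝ) : ℝ≥0∞ :=
  ∑' T : Lambda n, ENNReal.ofReal
    (Real.sqrt (p T) * Y.det ^ ((k : ℝ) / 2) * Real.exp (-2 * π * (T.1 * Y).trace))

/-!
Applying `x ≤ exp (x - 1)` to eigenvalues gives `det T * det Y ≤ exp (tr (T * Y) - n)`; scaling
`T` turns this into `(det T * det Y) ^ a ≤ (a / (c * e)) ^ (n * a) * exp (c * tr (T * Y))`.
With `a = k / 2 - β` and `c = 2 * π - 4 * π / k` each term of `q_k(Y)` keeps the decay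
`exp (-4 * π / k * tr (T * Y))`, while Stirling's formula reduces the remaining factor to a power
of `k`. To sum the decay, the lower bound on `Y` replaces `tr (T * Y)` by `∑ i, Y i i * T i i / r`;
the nonnegative `2 × 2` minors of `T` leave `O(∏ i, (T i i) ^ ((n - 1) / 2))` matrices with a given
diagonal, so the sum splits into one-dimensional sums `∑ m, m ^ ((n - 1) / 2) * exp (-b * m)`.
Hadamard's inequality turns the resulting product of the `Y i i` into `det Y`.
-/

section PosSemidef

lemma sq_apply_le_diag_mul_diag {ι : Type*} {T : Matrix ι ι ℝ} (hT : T.PosSemidef)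
    (i j : ι) : T i j ^ 2 ≤ T i i * T j j := by
  have hdet := (hT.submatrix ![i, j]).det_nonneg
  have hsymm : T j i = T i j := hT.1.apply i j
  simp only [Matrix.det_fin_two, Matrix.submatrix_apply, Matrix.cons_val_zero,
    Matrix.cons_val_one, hsymm] at hdet
  linarith

variable {ι : Type*} [Fintype ι] {S T Y : Matrix ι ι ℝ}

lemma exists_eq_conjTranspose_mul_self (hT : T.PosSemidef) :
    ∃ B : Matrix ι ι ℝ, T = B.conjTranspose * B := by
  classical
  open scoped MatrixOrder Matrix.Norms.L2Operator in
  exact CStarAlgebra.nonneg_iff_eq_star_mul_self.mp hT.nonneg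

lemma trace_mul_nonneg_of_posSemidef (hT : T.PosSemidef) (hY : Y.PosSemidef) :
    0 ≤ (T * Y).trace := by
  obtain ⟨B, rfl⟩ := exists_eq_conjTranspose_mul_self hT
  rw [Matrix.mul_assoc, Matrix.trace_mul_comm]
  exact (hY.mul_mul_conjTranspose_same B).trace_nonneg

lemma trace_mul_le_trace_mul_left (hT : T.PosSemidef) (hSY : (Y - S).PosSemidef) :
    (T * S).trace ≤ (T * Y).trace := by
  have h := trace_mul_nonneg_of_posSemidef hT hSY
  rwa [Matrix.mul_sub, Matrix.trace_sub, sub_nonneg] at h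

variable [DecidableEq ι]

lemma det_le_exp_trace_sub_card (hT : T.PosSemidef) :
    T.det ≤ Real.exp (T.trace - Fintype.card ι) := by
  have hsum : T.trace - Fintype.card ι = ∑ i, (hT.1.eigenvalues i - 1) := by
    simp [hT.1.trace_eq_sum_eigenvalues]
  rw [hsum, Real.exp_sum, hT.1.det_eq_prod_eigenvalues]
  refine Finset.prod_le_prod (fun i _ => hT.eigenvalues_nonneg i) fun i _ => ?_
  simpa using Real.add_one_le_exp (hT.1.eigenvalues i - 1)

lemma det_mul_det_le_exp_trace_mul (hT : T.PosSemidef) (hY : Y.PosSemidef) :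
    T.det * Y.det ≤ Real.exp ((T * Y).trace - Fintype.card ι) := by
  obtain ⟨B, rfl⟩ := exists_eq_conjTranspose_mul_self hT
  have h := det_le_exp_trace_sub_card (hY.mul_mul_conjTranspose_same B)
  rw [Matrix.trace_mul_comm, ← Matrix.mul_assoc] at h
  calc (B.conjTranspose * B).det * Y.det = (B * Y * B.conjTranspose).det := by
        simp only [Matrix.det_mul]; ring
    _ ≤ _ := h

lemma det_mul_det_rpow_le (hT : T.PosSemidef) (hY : Y.PosSemidef) {a c : ℝ}
    (ha : 0 < a) (hc : 0 < c) :
    (T.det * Y.det) ^ a ≤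
      ((a / (c * Real.exp 1)) ^ a) ^ Fintype.card ι * Real.exp (c * (T * Y).trace) := by
  have hscale : T.det * Y.det ≤
      (a / (c * Real.exp 1)) ^ Fintype.card ι * Real.exp (c / a * (T * Y).trace) := by
    have h := det_mul_det_le_exp_trace_mul (hT.smul (div_pos hc ha).le) hY
    rw [Matrix.det_smul, Matrix.smul_mul, Matrix.trace_smul, smul_eq_mul, mul_assoc,
      ← le_inv_mul_iff₀ (by positivity), Real.exp_sub] at h
    refine h.trans_eq ?_
    rw [← Real.exp_one_pow (Fintype.card ι), mul_div_left_comm, ← inv_pow, inv_div, ← div_pow,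
      div_div, mul_comm]
  calc (T.det * Y.det) ^ a
      ≤ ((a / (c * Real.exp 1)) ^ Fintype.card ι * Real.exp (c / a * (T * Y).trace)) ^ a := by
        gcongr
        exact mul_nonneg hT.det_nonneg hY.det_nonneg
    _ = _ := by
        rw [Real.mul_rpow (by positivity) (by positivity), Real.rpow_pow_comm (by positivity),
          ← Real.exp_mul]
        congr 2
        field_simp

-- Apply the determinant-trace inequality to `Y` and the inverse of its diagonal part.
lemma det_le_prod_diag (hY : Y.PosDef) : Y.det ≤ ∏ i, Y i i := by
  have hdiag : ∀ i, 0 < Y i i := fun i => hY.diag_pos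
  have hD : (Matrix.diagonal fun i => (Y i i)⁻¹).PosSemidef :=
    .diagonal fun i => (inv_pos.2 (hdiag i)).le
  have htrace : ((Matrix.diagonal fun i => (Y i i)⁻¹) * Y).trace = Fintype.card ι := by
    simp [Matrix.trace, Matrix.diagonal_mul, (hdiag _).ne']
  have h := det_mul_det_le_exp_trace_mul hD hY.posSemidef
  rwa [htrace, sub_self, Real.exp_zero, Matrix.det_diagonal, Finset.prod_inv_distrib,
    inv_mul_le_iff₀ (Finset.prod_pos fun i _ => hdiag i), mul_one] at h

end PosSemidef

section Sums

lemma tsum_pi_prod_eq_prod_tsum {α : Type*} : ∀ (n : ℕ) (f : Fin n → α → ℝ≥0∞),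
    ∑' x : Fin n → α, ∏ i, f i (x i) = ∏ i, ∑' a, f i a
  | 0, f => by simp
  | n + 1, f => by
    rw [← (Fin.consEquiv fun _ : Fin (n + 1) => α).tsum_eq, ENNReal.tsum_prod',
      Fin.prod_univ_succ]
    simp only [Fin.consEquiv_apply, Fin.prod_univ_succ, Fin.cons_zero, Fin.cons_succ,
      ENNReal.tsum_mul_left, tsum_pi_prod_eq_prod_tsum n fun i => f i.succ,
      ENNReal.tsum_mul_right]

lemma tsum_comp_eq_tsum_encard_mul {α β : Type*} (g : α → β) (f : β → ℝ≥0∞) :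
    ∑' a, f (g a) = ∑' b, ((g ⁻¹' {b}).encard : ℝ≥0∞) * f b := by
  rw [← ENNReal.tsum_fiberwise _ g]
  refine tsum_congr fun b => ?_
  rw [← ENNReal.tsum_set_const]
  exact tsum_congr fun a => congrArg f a.2

lemma rpow_le_rpow_mul_exp {s x : ℝ} (hs : 0 ≤ s) (hx : 0 ≤ x) :
    x ^ s ≤ (s + 1) ^ s * Real.exp x := by
  have hx' : x ≤ (s + 1) * Real.exp (x / (s + 1)) := by
    rw [← div_le_iff₀' (by positivity)]
    linarith [Real.add_one_le_exp (x / (s + 1))]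
  calc x ^ s ≤ ((s + 1) * Real.exp (x / (s + 1))) ^ s := by gcongr
    _ = (s + 1) ^ s * Real.exp (x / (s + 1) * s) := by
        rw [Real.mul_rpow (by positivity) (by positivity), ← Real.exp_mul]
    _ ≤ (s + 1) ^ s * Real.exp x := by
        gcongr
        rw [div_mul_eq_mul_div, div_le_iff₀ (by positivity)]
        linarith

lemma tsum_pnat_exp_neg_mul_le {c : ℝ} (hc : 0 < c) :
    ∑' m : ℕ+, ENNReal.ofReal (Real.exp (-(c * m))) ≤ ENNReal.ofReal c⁻¹ := by
  have hlt : Real.exp (-c) < 1 := Real.exp_lt_one_iff.2 (neg_neg_of_pos hc)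
  have hpow (m : ℕ) :
      Real.exp (-(c * ((m + 1 : ℕ) : ℝ))) = Real.exp (-c) * Real.exp (-c) ^ m := by
    rw [← pow_succ', ← Real.exp_nat_mul]
    congr 1
    ring
  rw [tsum_pnat_eq_tsum_succ (f := fun m : ℕ => ENNReal.ofReal (Real.exp (-(c * m))))]
  simp only [hpow]
  rw [← ENNReal.ofReal_tsum_of_nonneg (fun m => by positivity)
    ((summable_geometric_of_lt_one (by positivity) hlt).mul_left _), tsum_mul_left,
    tsum_geometric_of_lt_one (by positivity) hlt]
  apply ENNReal.ofReal_le_ofReal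
  rw [← div_eq_mul_inv, div_le_iff₀ (by linarith), inv_mul_eq_div, le_div_iff₀ hc]
  have hmul : Real.exp (-c) * Real.exp c = 1 := by simp [← Real.exp_add]
  nlinarith [Real.add_one_le_exp c, Real.exp_pos (-c)]

lemma tsum_pnat_rpow_mul_exp_neg_mul_le {s b : ℝ} (hs : 0 ≤ s) (hb : 0 < b) :
    ∑' m : ℕ+, ENNReal.ofReal ((m : ℝ) ^ s * Real.exp (-(b * m))) ≤
      ENNReal.ofReal (2 * (2 * (s + 1)) ^ s * b ^ (-(s + 1))) := by
  have hterm (m : ℕ+) : (m : ℝ) ^ s * Real.exp (-(b * m)) ≤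
      (2 * (s + 1)) ^ s * b ^ (-s) * Real.exp (-(b / 2 * m)) := by
    have h := rpow_le_rpow_mul_exp hs (show 0 ≤ b / 2 * (m : ℝ) by positivity)
    calc (m : ℝ) ^ s * Real.exp (-(b * m))
        = 2 ^ s * b ^ (-s) * (b / 2 * m) ^ s * Real.exp (-(b * m)) := by
          rw [Real.rpow_neg hb.le, Real.mul_rpow (by positivity) (by positivity),
            Real.div_rpow hb.le zero_le_two]
          field_simp
      _ ≤ 2 ^ s * b ^ (-s) * ((s + 1) ^ s * Real.exp (b / 2 * m)) * Real.exp (-(b * m)) := by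
          gcongr
      _ = (2 * (s + 1)) ^ s * b ^ (-s) * (Real.exp (b / 2 * m) * Real.exp (-(b * m))) := by
          rw [Real.mul_rpow zero_le_two (by positivity)]
          ring
      _ = _ := by
          rw [← Real.exp_add]
          congr 2
          ring
  calc ∑' m : ℕ+, ENNReal.ofReal ((m : ℝ) ^ s * Real.exp (-(b * m)))
      ≤ ∑' m : ℕ+, ENNReal.ofReal ((2 * (s + 1)) ^ s * b ^ (-s)) *
          ENNReal.ofReal (Real.exp (-(b / 2 * m))) := by
        gcongr with m
        rw [← ENNReal.ofReal_mul (by positivity)]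
        exact ENNReal.ofReal_le_ofReal (hterm m)
    _ ≤ ENNReal.ofReal ((2 * (s + 1)) ^ s * b ^ (-s)) * ENNReal.ofReal (b / 2)⁻¹ := by
        rw [ENNReal.tsum_mul_left]
        gcongr
        exact tsum_pnat_exp_neg_mul_le (half_pos hb)
    _ = _ := by
        rw [← ENNReal.ofReal_mul (by positivity), neg_add, Real.rpow_add hb, Real.rpow_neg_one]
        congr 1
        field_simp

end Sums

section HalfIntegral

/-- The integers of absolute value at most `x`. -/
noncomputable def intsAbsLE (x : ℝ) : Finset ℤ := Finset.Icc ⌈-x⌉ ⌊x⌋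

lemma mem_intsAbsLE {x : ℝ} {z : ℤ} : z ∈ intsAbsLE x ↔ |(z : ℝ)| ≤ x := by
  rw [intsAbsLE, Finset.mem_Icc, Int.ceil_le, Int.le_floor, abs_le]

lemma card_intsAbsLE_le {x : ℝ} (hx : 0 ≤ x) : ((intsAbsLE x).card : ℝ) ≤ 2 * x + 1 := by
  have hfloor : 0 ≤ ⌊x⌋ := Int.floor_nonneg.2 hx
  have hcard : ((intsAbsLE x).card : ℤ) = 2 * ⌊x⌋ + 1 := by
    rw [intsAbsLE, Int.card_Icc, Int.ceil_neg]
    omega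
  have hcast : ((intsAbsLE x).card : ℝ) = 2 * ⌊x⌋ + 1 := by exact_mod_cast hcard
  linarith [Int.floor_le x]

lemma prod_prod_Ioi_mul_eq_prod_pow {n : ℕ} (g : Fin n → ℝ) :
    ∏ i, ∏ j ∈ Finset.Ioi i, g i * g j = ∏ i, g i ^ (n - 1) := by
  rw [Finset.prod_prod_Ioi_mul_eq_prod_prod_off_diag fun _ i => g i]
  simp [Finset.card_compl]

namespace Lambda

variable {n : ℕ}

lemma exists_pnat_eq_diag (T : Lambda n) (i : Fin n) : ∃ m : ℕ+, (m : ℝ) = T.1 i i := by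
  obtain ⟨hpos, hdiag, -⟩ := T.2
  obtain ⟨z, hz⟩ := hdiag i
  have hz_pos : 0 < z := by exact_mod_cast hz ▸ hpos.diag_pos (i := i)
  lift z to ℕ using hz_pos.le
  exact ⟨⟨z, by exact_mod_cast hz_pos⟩, by simp [hz]⟩

/-- The diagonal of `T ∈ Λ_n` as a vector of positive integers. -/
noncomputable def diag (T : Lambda n) (i : Fin n) : ℕ+ := (exists_pnat_eq_diag T i).choose

lemma coe_diag (T : Lambda n) (i : Fin n) : (T.diag i : ℝ) = T.1 i i :=
  (exists_pnat_eq_diag T i).choose_spec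

/-- The entries of `2T` strictly above the diagonal; they are integers, so the floor only
changes their type. -/
noncomputable def doubleUpper (T : Lambda n) (i : Fin n) (j : Finset.Ioi i) : ℤ :=
  ⌊2 * T.1 i j⌋

lemma coe_doubleUpper (T : Lambda n) (i : Fin n) (j : Finset.Ioi i) :
    (T.doubleUpper i j : ℝ) = 2 * T.1 i j := by
  obtain ⟨z, hz⟩ := T.2.2.2 i j
  rw [doubleUpper, hz, Int.floor_intCast]

lemma eq_of_diag_eq_of_doubleUpper_eq {S T : Lambda n} (hdiag : S.diag = T.diag)
    (hupper : S.doubleUpper = T.doubleUpper) : S = T := by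
  have hlt (i j : Fin n) (hij : i < j) : S.1 i j = T.1 i j := by
    have h := congrArg (Int.cast : ℤ → ℝ)
      (congrFun (congrFun hupper i) ⟨j, Finset.mem_Ioi.2 hij⟩)
    simpa [coe_doubleUpper] using h
  have hsymm (U : Lambda n) (i j : Fin n) : U.1 i j = U.1 j i := U.2.1.1.apply j i
  ext i j
  rcases lt_trichotomy i j with hij | rfl | hij
  · exact hlt i j hij
  · rw [← coe_diag, ← coe_diag, hdiag]
  · rw [hsymm S, hsymm T, hlt j i hij]

/-- The integral upper triangles `z` with `|z i j| ≤ 2 √(d i) √(d j)`: positivity confines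
`doubleUpper T` to this box when `T` has diagonal `d`. -/
noncomputable def upperBox (d : Fin n → ℕ+) : Finset (∀ i : Fin n, Finset.Ioi i → ℤ) :=
  Fintype.piFinset fun i => Fintype.piFinset fun j =>
    intsAbsLE (2 * (√(d i) * √(d j)))

lemma doubleUpper_mem_upperBox (T : Lambda n) : T.doubleUpper ∈ upperBox T.diag := by
  simp only [upperBox, Fintype.mem_piFinset]
  intro i j
  have habs : |T.1 i j| ≤ √(T.diag i) * √(T.diag j) := by
    rw [← Real.sqrt_mul (by positivity), coe_diag, coe_diag]
    exact Real.abs_le_sqrt (sq_apply_le_diag_mul_diag T.2.1.posSemidef i j)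
  rw [mem_intsAbsLE, coe_doubleUpper, abs_mul, abs_two]
  gcongr

lemma encard_diag_fiber_le_card_upperBox (d : Fin n → ℕ+) :
    (diag ⁻¹' {d}).encard ≤ (upperBox d).card := by
  rw [← Set.encard_coe_eq_coe_finsetCard]
  refine Set.encard_le_encard_of_injOn (f := doubleUpper) ?_ ?_
  · rintro T rfl
    exact doubleUpper_mem_upperBox T
  · intro S hS T hT h
    exact eq_of_diag_eq_of_doubleUpper_eq (hS.trans hT.symm) h

lemma card_upperBox_le (d : Fin n → ℕ+) :
    ((upperBox d).card : ℝ) ≤ ∏ i, (5 * (d i : ℝ)) ^ (((n : ℝ) - 1) / 2) := by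
  have hone (i : Fin n) : 1 ≤ √(d i : ℝ) := Real.one_le_sqrt.2 (mod_cast (d i).pos)
  have hside (i j : Fin n) :
      ((intsAbsLE (2 * (√(d i : ℝ) * √(d j : ℝ)))).card : ℝ) ≤
        √(5 * (d i : ℝ)) * √(5 * (d j : ℝ)) :=
    calc _ ≤ 2 * (2 * (√(d i : ℝ) * √(d j : ℝ))) + 1 :=
          card_intsAbsLE_le (by positivity)
      _ ≤ 5 * (√(d i : ℝ) * √(d j : ℝ)) := by
          linarith [one_le_mul_of_one_le_of_one_le (hone i) (hone j)]
      _ = √5 * √5 * (√(d i : ℝ) * √(d j : ℝ)) := by rw [Real.mul_self_sqrt (by norm_num)]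
      _ = _ := by
          rw [Real.sqrt_mul (by norm_num), Real.sqrt_mul (by norm_num)]
          ring
  calc ((upperBox d).card : ℝ)
      = ∏ i, ∏ j ∈ Finset.Ioi i,
          ((intsAbsLE (2 * (√(d i) * √(d j)))).card : ℝ) := by
        rw [upperBox, Fintype.card_piFinset, Nat.cast_prod]
        refine Finset.prod_congr rfl fun i _ => ?_
        rw [Fintype.card_piFinset, Nat.cast_prod]
        exact Finset.prod_coe_sort (Finset.Ioi i) fun j =>
          ((intsAbsLE (2 * (√(d i) * √(d j)))).card : ℝ)
    _ ≤ ∏ i, ∏ j ∈ Finset.Ioi i, √(5 * (d i : ℝ)) * √(5 * (d j : ℝ)) := by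
        gcongr
        exact hside _ _
    _ = ∏ i, √(5 * (d i : ℝ)) ^ (n - 1) := prod_prod_Ioi_mul_eq_prod_pow _
    _ = _ := by
        refine Finset.prod_congr rfl fun i _ => ?_
        rw [Real.sqrt_eq_rpow, ← Real.rpow_mul_natCast (by positivity), Nat.cast_pred i.pos]
        ring_nf

lemma encard_diag_fiber_mul_le (d : Fin n → ℕ+) (b : Fin n → ℝ) :
    ((diag ⁻¹' {d}).encard : ℝ≥0∞) * ENNReal.ofReal (Real.exp (-∑ i, b i * d i)) ≤
      ∏ i, ENNReal.ofReal (5 ^ (((n : ℝ) - 1) / 2)) *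
        ENNReal.ofReal ((d i : ℝ) ^ (((n : ℝ) - 1) / 2) * Real.exp (-(b i * d i))) := by
  have hcard : ((diag ⁻¹' {d}).encard : ℝ≥0∞) ≤
      ENNReal.ofReal (∏ i, (5 * (d i : ℝ)) ^ (((n : ℝ) - 1) / 2)) :=
    calc ((diag ⁻¹' {d}).encard : ℝ≥0∞) ≤ ((upperBox d).card : ℝ≥0∞) := by
          exact_mod_cast encard_diag_fiber_le_card_upperBox d
      _ = ENNReal.ofReal (upperBox d).card := (ENNReal.ofReal_natCast _).symm
      _ ≤ _ := ENNReal.ofReal_le_ofReal (card_upperBox_le d)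
  refine (mul_le_mul_left hcard _).trans_eq ?_
  rw [← Finset.sum_neg_distrib, Real.exp_sum, ← ENNReal.ofReal_mul (by positivity),
    ← Finset.prod_mul_distrib, ENNReal.ofReal_prod_of_nonneg fun i _ => by positivity]
  refine Finset.prod_congr rfl fun i _ => ?_
  rw [← ENNReal.ofReal_mul (by positivity), ← mul_assoc,
    ← Real.mul_rpow (by positivity) (by positivity)]

lemma tsum_exp_neg_sum_mul_diag_le {b : Fin n → ℝ} (hb : ∀ i, 0 < b i) :
    ∑' T : Lambda n, ENNReal.ofReal (Real.exp (-∑ i, b i * T.1 i i)) ≤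
      ENNReal.ofReal (∏ i, 2 * (5 * ((n : ℝ) + 1)) ^ (((n : ℝ) - 1) / 2) *
        b i ^ (-(((n : ℝ) + 1) / 2))) := by
  set s : ℝ := ((n : ℝ) - 1) / 2 with hs
  have hfactor (i : Fin n) :
      ∑' m : ℕ+, ENNReal.ofReal (5 ^ s) *
          ENNReal.ofReal ((m : ℝ) ^ s * Real.exp (-(b i * m))) ≤
        ENNReal.ofReal (2 * (5 * ((n : ℝ) + 1)) ^ s * b i ^ (-(((n : ℝ) + 1) / 2))) := by
    have hs_nonneg : 0 ≤ s := by
      have : (1 : ℝ) ≤ n := mod_cast i.pos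
      linarith
    rw [show ((n : ℝ) + 1) / 2 = s + 1 by linarith, show (n : ℝ) + 1 = 2 * (s + 1) by linarith,
      Real.mul_rpow (by norm_num) (by positivity), mul_left_comm 2, mul_assoc,
      ENNReal.ofReal_mul (by positivity), ENNReal.tsum_mul_left]
    gcongr
    exact tsum_pnat_rpow_mul_exp_neg_mul_le hs_nonneg (hb i)
  simp only [← coe_diag]
  calc _ = _ := tsum_comp_eq_tsum_encard_mul diag fun d =>
        ENNReal.ofReal (Real.exp (-∑ i, b i * d i))
    _ ≤ _ := ENNReal.tsum_le_tsum fun d => encard_diag_fiber_mul_le d b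
    _ = _ := tsum_pi_prod_eq_prod_tsum n fun i (m : ℕ+) => ENNReal.ofReal (5 ^ s) *
        ENNReal.ofReal ((m : ℝ) ^ s * Real.exp (-(b i * m)))
    _ ≤ _ := Finset.prod_le_prod' fun i _ => hfactor i
    _ = _ := (ENNReal.ofReal_prod_of_nonneg fun i _ => by have := hb i; positivity).symm

lemma tsum_exp_neg_mul_trace_le {r t : ℝ} (hr : 0 < r) (ht : 0 < t)
    {Y : Matrix (Fin n) (Fin n) ℝ} (hY : Y.PosDef) (hdiag : LoewnerLE (r⁻¹ • diagPart Y) Y) :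
    ∑' T : Lambda n, ENNReal.ofReal (Real.exp (-(t * (T.1 * Y).trace))) ≤
      ENNReal.ofReal ((2 * (5 * ((n : ℝ) + 1)) ^ (((n : ℝ) - 1) / 2)) ^ n *
        ((r / t) ^ n / Y.det) ^ (((n : ℝ) + 1) / 2)) := by
  have hY_diag (i : Fin n) : 0 < Y i i := hY.diag_pos
  have hY_det : 0 < Y.det := hY.det_pos
  have hb (i : Fin n) : 0 < t / r * Y i i := mul_pos (div_pos ht hr) (hY_diag i)
  have htrace (T : Lambda n) : ∑ i, t / r * Y i i * T.1 i i ≤ t * (T.1 * Y).trace :=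
    calc ∑ i, t / r * Y i i * T.1 i i = t * (T.1 * (r⁻¹ • diagPart Y)).trace := by
          simp only [diagPart, Matrix.trace, Matrix.mul_smul, Matrix.diag_apply,
            Matrix.smul_apply, Matrix.mul_diagonal, smul_eq_mul, Finset.mul_sum]
          exact Finset.sum_congr rfl fun i _ => by ring
      _ ≤ _ := by
          gcongr
          exact trace_mul_le_trace_mul_left T.2.1.posSemidef hdiag
  have hprod : ∏ i, (t / r * Y i i) ^ (-(((n : ℝ) + 1) / 2)) ≤
      ((r / t) ^ n / Y.det) ^ (((n : ℝ) + 1) / 2) :=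
    calc _ = ((r / t) ^ n / ∏ i, Y i i) ^ (((n : ℝ) + 1) / 2) := by
          rw [Real.finsetProd_rpow _ _ fun i _ => (hb i).le, Finset.prod_mul_distrib,
            Finset.prod_const, Finset.card_fin, Real.rpow_neg_eq_inv_rpow, mul_inv, ← inv_pow,
            inv_div, div_eq_mul_inv ((r / t) ^ n)]
      _ ≤ _ := by
          have := Finset.prod_pos fun i (_ : i ∈ Finset.univ) => hY_diag i
          gcongr
          exact det_le_prod_diag hY
  calc _ ≤ ∑' T : Lambda n, ENNReal.ofReal (Real.exp (-∑ i, t / r * Y i i * T.1 i i)) := by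
        gcongr with T
        exact htrace T
    _ ≤ _ := tsum_exp_neg_sum_mul_diag_le hb
    _ ≤ _ := by
        rw [Finset.prod_mul_distrib, Finset.prod_const, Finset.card_fin]
        gcongr

end Lambda

end HalfIntegral

section Weight

lemma rpow_mul_exp_neg_le_Gamma {k : ℕ} (hk : k ≠ 0) :
    (k : ℝ) ^ ((k : ℝ) - 1 / 2) * Real.exp (-k) ≤ Real.Gamma k := by
  have hk_pos : (0 : ℝ) < k := by positivity
  have hfactorial : (k.factorial : ℝ) = k * Real.Gamma k := by
    rw [← Real.Gamma_add_one hk_pos.ne', Real.Gamma_nat_eq_factorial]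
  refine le_of_mul_le_mul_left ?_ hk_pos
  calc (k : ℝ) * ((k : ℝ) ^ ((k : ℝ) - 1 / 2) * Real.exp (-k))
      = √k * (k / Real.exp 1) ^ k := by
        have hpow : (k : ℝ) * (k : ℝ) ^ ((k : ℝ) - 1 / 2) = √k * (k : ℝ) ^ k := by
          rw [Real.sqrt_eq_rpow, ← Real.rpow_natCast, ← Real.rpow_add hk_pos,
            mul_comm, ← Real.rpow_add_one hk_pos.ne']
          ring_nf
        rw [← mul_assoc, hpow, div_pow, Real.exp_one_pow, Real.exp_neg, mul_assoc, div_eq_mul_inv]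
    _ ≤ √(2 * π * k) * (k / Real.exp 1) ^ k := by
        gcongr
        exact le_mul_of_one_le_left hk_pos.le (by linarith [Real.pi_gt_three])
    _ ≤ k.factorial := Stirling.le_factorial_stirling k
    _ = k * Real.Gamma k := hfactorial

lemma add_div_rpow_le_exp {m t : ℝ} (hm : 1 ≤ m) (hmt : 0 ≤ m + t) :
    ((m + t) / m) ^ (m + t) ≤ Real.exp (t * (1 + t)) := by
  have hm_pos : 0 < m := by linarith
  calc ((m + t) / m) ^ (m + t) ≤ Real.exp (t / m) ^ (m + t) := by
        gcongr
        rw [add_div, div_self hm_pos.ne', add_comm]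
        exact Real.add_one_le_exp _
    _ = Real.exp (t + t ^ 2 / m) := by
        rw [← Real.exp_mul]
        congr 1
        field_simp
    _ ≤ Real.exp (t * (1 + t)) := by
        gcongr
        linarith [div_le_self (sq_nonneg t) hm]

lemma rpow_div_sqrt_Gamma_le {k : ℕ} (hk : k ≠ 0) :
    (4 * π) ^ ((k : ℝ) / 2) / Real.Gamma k ^ (1 / 2 : ℝ) ≤
      (4 * π * Real.exp 1 / k) ^ ((k : ℝ) / 2) * (k : ℝ) ^ (1 / 4 : ℝ) := by
  have hk_pos : (0 : ℝ) < k := by positivity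
  have hsqrt : (k : ℝ) ^ ((k : ℝ) / 2 - 1 / 4) * Real.exp (-(k / 2)) ≤
      Real.Gamma k ^ (1 / 2 : ℝ) :=
    calc _ = ((k : ℝ) ^ ((k : ℝ) - 1 / 2) * Real.exp (-k)) ^ (1 / 2 : ℝ) := by
          rw [Real.mul_rpow (by positivity) (by positivity), ← Real.rpow_mul hk_pos.le,
            ← Real.exp_mul]
          ring_nf
      _ ≤ _ := by
          gcongr
          exact rpow_mul_exp_neg_le_Gamma hk
  calc _ ≤ (4 * π) ^ ((k : ℝ) / 2) /
        ((k : ℝ) ^ ((k : ℝ) / 2 - 1 / 4) * Real.exp (-(k / 2))) := by gcongr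
    _ = _ := by
        rw [Real.div_rpow (by positivity) hk_pos.le,
          Real.mul_rpow (x := 4 * π) (by positivity) (by positivity), ← Real.exp_mul,
          one_mul, Real.exp_neg, Real.rpow_sub hk_pos]
        field_simp

-- Stirling's formula cancels the growth in `k` of the maximum of `x ^ a * exp (-c * x)`.
lemma rpow_div_sqrt_Gamma_mul_rpow_le {k : ℕ} {β : ℝ} (hk : 4 ≤ k) (hβ : 2 * β < k) :
    (4 * π) ^ ((k : ℝ) / 2) / Real.Gamma k ^ (1 / 2 : ℝ) *
        (((k : ℝ) / 2 - β) / ((2 * π - 4 * π / k) * Real.exp 1)) ^ ((k : ℝ) / 2 - β) ≤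
      (4 * π * Real.exp 1) ^ β * Real.exp ((1 - β) * (2 - β)) * (k : ℝ) ^ (1 / 4 - β) := by
  have hk_four : (4 : ℝ) ≤ k := mod_cast hk
  have hk_pos : (0 : ℝ) < k := by linarith
  set a : ℝ := (k : ℝ) / 2 - β with ha
  set m : ℝ := (k : ℝ) / 2 - 1 with hm
  set x : ℝ := 4 * π * Real.exp 1 / k with hx
  have ha_pos : 0 < a := by linarith
  have hm_one : 1 ≤ m := by linarith
  have hx_pos : 0 < x := by positivity
  have hbase : a / ((2 * π - 4 * π / k) * Real.exp 1) = a / m * x⁻¹ := by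
    have hc : 2 * π - 4 * π / k = 4 * π / k * m := by
      rw [hm]
      field_simp
      ring
    rw [hc, hx]
    field_simp
  have hratio : (a / m) ^ a ≤ Real.exp ((1 - β) * (2 - β)) := by
    have h := add_div_rpow_le_exp hm_one (t := 1 - β) (by linarith)
    rwa [show m + (1 - β) = a by linarith, show 1 + (1 - β) = 2 - β by ring] at h
  rw [hbase, Real.mul_rpow (x := a / m) (by positivity) (by positivity)]
  calc _ ≤ x ^ ((k : ℝ) / 2) * (k : ℝ) ^ (1 / 4 : ℝ) *
        (Real.exp ((1 - β) * (2 - β)) * x⁻¹ ^ a) := by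
        gcongr
        exact rpow_div_sqrt_Gamma_le (k := k) (by omega)
    _ = x ^ β * (k : ℝ) ^ (1 / 4 : ℝ) * Real.exp ((1 - β) * (2 - β)) := by
        have hxpow : x ^ ((k : ℝ) / 2) * x⁻¹ ^ a = x ^ β := by
          rw [Real.inv_rpow hx_pos.le, ← Real.rpow_neg hx_pos.le, ← Real.rpow_add hx_pos, ha]
          ring_nf
        rw [← hxpow]
        ring
    _ = _ := by
        rw [hx, Real.div_rpow (by positivity) hk_pos.le, Real.rpow_sub hk_pos]
        ring

namespace Admissible

variable {n k : ℕ} {α β A : ℝ} {p : Lambda n → ℝ} {Y : Matrix (Fin n) (Fin n) ℝ}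

lemma sqrt_apply_le (hp : Admissible n k α β A p) (T : Lambda n) :
    √(p T) ≤ A * (k : ℝ) ^ α * ((4 * π) ^ ((k : ℝ) / 2) / Real.Gamma k ^ (1 / 2 : ℝ)) ^ n *
      T.1.det ^ ((k : ℝ) / 2 - β) := by
  refine (hp.2 T).trans_eq ?_
  rw [div_pow, ← Real.rpow_mul_natCast (by positivity),
    ← Real.rpow_mul_natCast (Real.Gamma_nonneg_of_nonneg k.cast_nonneg)]
  ring_nf

lemma qk_term_le_mul_exp_trace (hp : Admissible n k α β A p) (hA : 0 ≤ A) (hβ : 2 * β < k)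
    (hY : Y.PosDef) {c : ℝ} (hc : 0 < c) (T : Lambda n) :
    √(p T) * Y.det ^ ((k : ℝ) / 2) * Real.exp (-2 * π * (T.1 * Y).trace) ≤
      A * (k : ℝ) ^ α * Y.det ^ β *
        ((4 * π) ^ ((k : ℝ) / 2) / Real.Gamma k ^ (1 / 2 : ℝ) *
          (((k : ℝ) / 2 - β) / (c * Real.exp 1)) ^ ((k : ℝ) / 2 - β)) ^ n *
        Real.exp (-((2 * π - c) * (T.1 * Y).trace)) := by
  have hT_det : 0 < T.1.det := T.2.1.det_pos
  have hY_det : 0 < Y.det := hY.det_pos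
  have hcoeff := hp.sqrt_apply_le T
  set a : ℝ := (k : ℝ) / 2 - β with ha
  set τ : ℝ := (T.1 * Y).trace
  set G : ℝ := (4 * π) ^ ((k : ℝ) / 2) / Real.Gamma k ^ (1 / 2 : ℝ)
  have ha_pos : 0 < a := by linarith
  have hdet := det_mul_det_rpow_le T.2.1.posSemidef hY.posSemidef ha_pos hc
  rw [Fintype.card_fin] at hdet
  calc √(p T) * Y.det ^ ((k : ℝ) / 2) * Real.exp (-2 * π * τ)
      ≤ A * (k : ℝ) ^ α * G ^ n * T.1.det ^ a * Y.det ^ ((k : ℝ) / 2) *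
          Real.exp (-2 * π * τ) := by gcongr
    _ = A * (k : ℝ) ^ α * Y.det ^ β * G ^ n * (T.1.det * Y.det) ^ a *
          Real.exp (-2 * π * τ) := by
        rw [Real.mul_rpow hT_det.le hY_det.le, show (k : ℝ) / 2 = β + a by linarith,
          Real.rpow_add hY_det]
        ring
    _ ≤ A * (k : ℝ) ^ α * Y.det ^ β * G ^ n *
          (((a / (c * Real.exp 1)) ^ a) ^ n * Real.exp (c * τ)) * Real.exp (-2 * π * τ) := by
        gcongr
    _ = _ := by
        rw [show -((2 * π - c) * τ) = c * τ + -2 * π * τ by ring, Real.exp_add, mul_pow]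
        ring

lemma qk_term_le_of_four_le (hp : Admissible n k α β A p) (hA : 0 ≤ A) (hk : 4 ≤ k) (hβ : 2 * β < k)
    (hY : Y.PosDef) (T : Lambda n) :
    √(p T) * Y.det ^ ((k : ℝ) / 2) * Real.exp (-2 * π * (T.1 * Y).trace) ≤
      A * ((4 * π * Real.exp 1) ^ β * Real.exp ((1 - β) * (2 - β))) ^ n *
        (((k : ℝ) ^ n / Y.det) ^ (-β) * (k : ℝ) ^ ((n : ℝ) / 4 + α)) *
        Real.exp (-(4 * π / k * (T.1 * Y).trace)) := by
  have hk_four : (4 : ℝ) ≤ k := mod_cast hk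
  have hk_pos : (0 : ℝ) < k := by linarith
  have hY_det : 0 < Y.det := hY.det_pos
  have hc_pos : 0 < 2 * π - 4 * π / k := by
    rw [sub_pos, div_lt_iff₀ hk_pos]
    nlinarith [Real.pi_pos]
  have ha_pos : 0 < (k : ℝ) / 2 - β := by linarith
  have hterm := hp.qk_term_le_mul_exp_trace hA hβ hY hc_pos T
  rw [sub_sub_cancel] at hterm
  calc _ ≤ _ := hterm
    _ ≤ A * (k : ℝ) ^ α * Y.det ^ β *
          ((4 * π * Real.exp 1) ^ β * Real.exp ((1 - β) * (2 - β)) *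
            (k : ℝ) ^ (1 / 4 - β)) ^ n *
          Real.exp (-(4 * π / k * (T.1 * Y).trace)) := by
        gcongr A * (k : ℝ) ^ α * Y.det ^ β * ?_ * _
        exact pow_le_pow_left₀ (by positivity) (rpow_div_sqrt_Gamma_mul_rpow_le hk hβ) n
    _ = _ := by
        rw [mul_pow, ← Real.rpow_mul_natCast hk_pos.le, Real.div_rpow (by positivity) hY_det.le,
          Real.rpow_neg hY_det.le, div_inv_eq_mul, ← Real.rpow_natCast_mul hk_pos.le,
          show (1 / 4 - β) * n = n * -β + n / 4 by ring, Real.rpow_add hk_pos,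
          Real.rpow_add hk_pos]
        ring

lemma qk_le {r : ℝ} (hp : Admissible n k α β A p) (hA : 0 ≤ A) (hk : 4 ≤ k) (hβ : 2 * β < k)
    (hr : 0 < r) (hY : Y.PosDef) (hdiag : LoewnerLE (r⁻¹ • diagPart Y) Y) :
    qk n k p Y ≤ ENNReal.ofReal
      (A * ((4 * π * Real.exp 1) ^ β * Real.exp ((1 - β) * (2 - β))) ^ n *
        (2 * (5 * ((n : ℝ) + 1)) ^ (((n : ℝ) - 1) / 2)) ^ n *
        ((r / (4 * π)) ^ n) ^ (((n : ℝ) + 1) / 2) *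
        (((k : ℝ) ^ n / Y.det) ^ (((n : ℝ) + 1) / 2 - β) * (k : ℝ) ^ ((n : ℝ) / 4 + α))) := by
  have hk_pos : (0 : ℝ) < k := mod_cast (by omega : 0 < k)
  set B : ℝ := A * ((4 * π * Real.exp 1) ^ β * Real.exp ((1 - β) * (2 - β))) ^ n
  set K : ℝ := (2 * (5 * ((n : ℝ) + 1)) ^ (((n : ℝ) - 1) / 2)) ^ n
  set X : ℝ := (k : ℝ) ^ n / Y.det with hX
  have hX_pos : 0 < X := div_pos (pow_pos hk_pos n) hY.det_pos
  set Q : ℝ := X ^ (-β) * (k : ℝ) ^ ((n : ℝ) / 4 + α) with hQ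
  have hscale : (r / (4 * π / k)) ^ n / Y.det = (r / (4 * π)) ^ n * X := by
    rw [hX, ← div_mul, mul_pow, mul_div_assoc]
  calc qk n k p Y
      ≤ ∑' T : Lambda n, ENNReal.ofReal (B * Q) *
          ENNReal.ofReal (Real.exp (-(4 * π / k * (T.1 * Y).trace))) := by
        refine ENNReal.tsum_le_tsum fun T => ?_
        rw [← ENNReal.ofReal_mul (by positivity)]
        exact ENNReal.ofReal_le_ofReal (hp.qk_term_le_of_four_le hA hk hβ hY T)
    _ ≤ ENNReal.ofReal (B * Q) * ENNReal.ofReal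
          (K * ((r / (4 * π / k)) ^ n / Y.det) ^ (((n : ℝ) + 1) / 2)) := by
        rw [ENNReal.tsum_mul_left]
        gcongr
        exact Lambda.tsum_exp_neg_mul_trace_le hr (by positivity) hY hdiag
    _ = _ := by
        rw [← ENNReal.ofReal_mul (by positivity), hscale,
          Real.mul_rpow (by positivity) hX_pos.le, hQ, sub_eq_add_neg, Real.rpow_add hX_pos]
        congr 1
        ring

end Admissible

end Weight

theorem statement5_general (n : ℕ) {r A : ℝ} (α β : ℝ) (hr : 0 < r) (hA : 0 < A) :
    ∃ C : ℝ, 0 < C ∧ ∃ k₀ : ℕ, ∀ k : ℕ, k₀ ≤ k →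
      ∀ p : Lambda n → ℝ, Admissible n k α β A p →
      ∀ Y : Matrix (Fin n) (Fin n) ℝ, Y.PosDef → LoewnerLE (r⁻¹ • diagPart Y) Y →
        qk n k p Y ≤ ENNReal.ofReal
          (C * (((k : ℝ) ^ n / Y.det) ^ (((n : ℝ) + 1) / 2 - β) *
              (k : ℝ) ^ ((n : ℝ) / 4 + α))) := by
  obtain ⟨k₀, hk₀⟩ := exists_nat_gt (2 * β)
  refine ⟨_, ?_, max 4 k₀, fun k hk p hp Y hY hdiag =>
    hp.qk_le hA.le (le_of_max_le_left hk) ?_ hr hY hdiag⟩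
  · positivity
  · exact hk₀.trans_le (mod_cast le_of_max_le_right hk)

theorem statement5 {n : ℕ} (hn : 1 ≤ n) (r ε α β A : ℝ) (hr : 1 ≤ r)
    (hε : ε ∈ Set.Ioo (0 : ℝ) 1) (hA : 0 < A) :
    ∃ C : ℝ, 0 < C ∧ ∃ c₀ : ℝ, 0 < c₀ ∧ ∃ k₀ : ℕ, ∀ k : ℕ, k₀ ≤ k →
      ∀ p : Lambda n → ℝ, Admissible n k α β A p →
      ∀ Y : Matrix (Fin n) (Fin n) ℝ, MinkReduced r Y →
        qk n k p Y ≤ ENNReal.ofReal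
          (C * (((k : ℝ) ^ n / Y.det) ^ (((n : ℝ) + 1) / 2 - β) *
              (k : ℝ) ^ ((n : ℝ) / 4 + α) +
            Real.exp (-c₀ * (k : ℝ) ^ ε) * Y.det ^ (-((n : ℝ) + 1) / 2))) := by
  obtain ⟨C, hC, k₀, h⟩ := statement5_general n α β (zero_lt_one.trans_le hr) hA
  refine ⟨C, hC, 1, one_pos, k₀, fun k hk p hp Y hY => (h k hk p hp Y hY.1 hY.2.1).trans ?_⟩
  have hY_det : 0 < Y.det := hY.1.det_pos
  gcongr
  exact le_add_of_nonneg_right (by positivity)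
end

section
/- Let n ≥ 1 be an integer, r ≥ 1, ε ∈ (0,1), α, β real numbers and A > 0. There exist constants C > 0, c₀ > 0 and k₀ (depending only on n, r, ε, α, β, A) such that for every integer k ≥ k₀, every (α,β,A)-admissible function p : Λ_n → [0,∞), and every r-reduced n×n matrix Y with Y ≥ 1_n in the Loewner order: q_k(Y) ≤ C·[ (k^n/det(Y))^{(n+1)/4 − β} · k^{n/4 + α + ε} + exp(−c₀ k^{ε}) · det(Y)^{−(n+1)/2} ]. -/
open scoped Real ENNReal

/-!
Put `U = (4π/k) T Y` and let `Φ(U) = tr U - log det U - n` be Stein's loss. Stirling's lower bound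
for `Γ(k)` turns the admissibility bound into
`p(T)^{1/2} det(Y)^{k/2} exp(-2π tr(TY)) ≪
  (k^n / det Y)^{-β} k^{n/4+α} det(U)^{-β} exp(-(k/2) Φ(U))`,
and since `|log det U| ≤ Φ(U) + n`, half of the exponential pays for the factor `det(U)^{-β}` once
`k ≥ 4|β|`. It remains to sum `exp(-(k/4) Φ((4π/k) T Y))` over `T`.

If all eigenvalues of `U` are within `1/2` of `1`, then `Φ(U) ≫ tr (U - 1)²`, which by reducedness
dominates `∑ (4π/k)² Y_ii Y_jj (T_ij - E_ij)²` for `E = (k/4π) Y⁻¹`. The sum over such `T` is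
therefore a product over `i ≤ j` of one-dimensional Gaussian lattice sums of width about
`(k / (Y_ii Y_jj))^{1/2}`; such `T` exist only if every `Y_ii ≪ k`, and then the product is
`≪ (k^n / ∏ Y_ii)^{(n+1)/4} ≤ (k^n / det Y)^{(n+1)/4}`. If some eigenvalue is farther away, then
`Φ(U) ≫ 1 + tr U`, and these `T` contribute `≪ exp(-δ k) exp(-c tr Y)`, which absorbs any power of
`k` and of `det Y`.
-/

section Scalar

/-- The defect `φ(u) = u - 1 - log u` in the inequality `log u ≤ u - 1`. -/
noncomputable def logDefect (u : ℝ) : ℝ := u - 1 - Real.log u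

variable {u : ℝ}

theorem logDefect_nonneg (hu : 0 < u) : 0 ≤ logDefect u :=
  sub_nonneg.mpr (Real.log_le_sub_one_of_pos hu)

theorem log_le_two_mul_sqrt_sub_one (hu : 0 < u) : Real.log u ≤ 2 * (√u - 1) := by
  have h := Real.log_le_sub_one_of_pos (Real.sqrt_pos.mpr hu)
  rw [Real.log_sqrt hu.le] at h
  linarith

theorem sq_sqrt_sub_one_le_logDefect (hu : 0 < u) : (√u - 1) ^ 2 ≤ logDefect u := by
  have hlog := log_le_two_mul_sqrt_sub_one hu
  have hsq := Real.sq_sqrt hu.le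
  unfold logDefect
  linarith

theorem sq_sub_one_le_logDefect_mul (hu : 0 < u) :
    (u - 1) ^ 2 ≤ logDefect u * (2 * (u + 1)) := by
  have hsq := Real.sq_sqrt hu.le
  calc (u - 1) ^ 2 = (√u - 1) ^ 2 * (√u + 1) ^ 2 := by
        nth_rw 1 [← hsq]
        ring
    _ ≤ logDefect u * (2 * (u + 1)) := by
        gcongr
        · exact logDefect_nonneg hu
        · exact sq_sqrt_sub_one_le_logDefect hu
        · linarith [sq_nonneg (√u - 1)]

theorem sq_sub_one_le_five_mul_logDefect (hu : 0 < u) (h : |u - 1| ≤ 1 / 2) :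
    (u - 1) ^ 2 ≤ 5 * logDefect u := by
  have hmul := sq_sub_one_le_logDefect_mul hu
  have hu' := (abs_le.mp h).2
  nlinarith [logDefect_nonneg hu]

theorem one_le_twenty_mul_logDefect (hu : 0 < u) (h : 1 / 2 ≤ |u - 1|) :
    1 ≤ 20 * logDefect u := by
  have hmul := sq_sub_one_le_logDefect_mul hu
  by_contra! hlt
  rcases le_abs.mp h with h | h <;> nlinarith

theorem le_four_mul_logDefect_add_one (hu : 0 < u) : u ≤ 4 * (logDefect u + 1) := by
  have hlog := log_le_two_mul_sqrt_sub_one hu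
  have hsq := Real.sq_sqrt hu.le
  unfold logDefect
  nlinarith [sq_nonneg (3 * √u - 4)]

theorem abs_log_le_logDefect_add_one (hu : 0 < u) : |Real.log u| ≤ logDefect u + 1 := by
  have hlog := log_le_two_mul_sqrt_sub_one hu
  have hsq := Real.sq_sqrt hu.le
  unfold logDefect
  exact abs_le.mpr ⟨by linarith, by nlinarith [sq_nonneg (√u - 2)]⟩

theorem exists_rpow_le_mul_exp (M : ℝ) {c : ℝ} (hc : 0 < c) :
    ∃ C : ℝ, 0 < C ∧ ∀ {x : ℝ}, 1 ≤ x → x ^ M ≤ C * Real.exp (c * x) := by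
  set N := ⌈M⌉₊
  refine ⟨N.factorial / c ^ N, by positivity, fun {x} hx => ?_⟩
  calc x ^ M ≤ x ^ (N : ℝ) := Real.rpow_le_rpow_of_exponent_le hx (Nat.le_ceil M)
    _ = N.factorial / c ^ N * ((c * x) ^ N / N.factorial) := by
        rw [Real.rpow_natCast, mul_pow]
        field_simp
    _ ≤ N.factorial / c ^ N * Real.exp (c * x) := by
        gcongr
        exact Real.pow_div_factorial_le_exp _ (by positivity) N

theorem le_log_Gamma_natCast {k : ℕ} (hk : k ≠ 0) :
    (k - 1 / 2 : ℝ) * Real.log k - k ≤ Real.log (Real.Gamma k) := by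
  have hk' : (0 : ℝ) < k := by positivity
  have hfac : Real.log (k.factorial : ℝ) = Real.log k + Real.log (Real.Gamma k) := by
    rw [← Real.Gamma_nat_eq_factorial, Real.Gamma_add_one hk'.ne',
      Real.log_mul hk'.ne' (Real.Gamma_pos_of_pos hk').ne']
  have htwo_pi : 0 ≤ Real.log (2 * π) := Real.log_nonneg (by linarith [Real.pi_gt_three])
  linarith [Stirling.le_log_factorial_stirling hk]

end Scalar

section PosDef

open scoped MatrixOrder

theorem abs_apply_le_of_posSemidef {ι : Type*} [Finite ι] {T : Matrix ι ι ℝ}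
    (hT : T.PosSemidef) (i j : ι) : |T i j| ≤ (T i i + T j j) / 2 := by
  classical
  cases nonempty_fintype ι
  obtain ⟨B, rfl⟩ := CStarAlgebra.nonneg_iff_eq_star_mul_self.mp hT.nonneg
  simp only [Matrix.star_eq_conjTranspose, Matrix.mul_apply, Matrix.conjTranspose_apply,
    star_trivial]
  rw [← Finset.sum_add_distrib, Finset.sum_div]
  refine (Finset.abs_sum_le_sum_abs _ _).trans (Finset.sum_le_sum fun k _ => abs_le.mpr ⟨?_, ?_⟩)
  · linarith [sq_nonneg (B k i + B k j)]
  · linarith [sq_nonneg (B k i - B k j)]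

variable {ι : Type*} [Fintype ι]

theorem trace_mul_nonneg_of_posSemidef_s6 {M N : Matrix ι ι ℝ} (hM : M.PosSemidef)
    (hN : N.PosSemidef) : 0 ≤ (M * N).trace := by
  classical
  obtain ⟨B, rfl⟩ := CStarAlgebra.nonneg_iff_eq_star_mul_self.mp hN.nonneg
  rw [← Matrix.mul_assoc, Matrix.trace_mul_comm, ← Matrix.mul_assoc]
  exact (hM.mul_mul_conjTranspose_same B).trace_nonneg

variable [DecidableEq ι]

theorem sum_diag_mul_le_trace_mul {T Y : Matrix ι ι ℝ} {w : ι → ℝ} (hT : T.PosSemidef)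
    (hw : (Y - Matrix.diagonal w).PosSemidef) : ∑ i, T i i * w i ≤ (T * Y).trace := by
  have h := trace_mul_nonneg_of_posSemidef_s6 hT hw
  rw [Matrix.mul_sub, Matrix.trace_sub, sub_nonneg] at h
  simpa [Matrix.trace, Matrix.mul_diagonal] using h

theorem sum_mul_mul_sq_le_trace_mul_mul_mul {E Y : Matrix ι ι ℝ} {w : ι → ℝ}
    (hE : E.IsHermitian) (hY : Y.PosSemidef) (hw₀ : 0 ≤ w)
    (hw : (Y - Matrix.diagonal w).PosSemidef) :
    ∑ i, ∑ j, w i * w j * E i j ^ 2 ≤ (E * Y * (E * Y)).trace := by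
  set D := Matrix.diagonal w
  have conj_posSemidef {Z : Matrix ι ι ℝ} (hZ : Z.PosSemidef) : (E * Z * E).PosSemidef := by
    simpa only [hE.eq] using hZ.mul_mul_conjTranspose_same E
  calc ∑ i, ∑ j, w i * w j * E i j ^ 2 = ∑ i, (E * D * E) i i * w i := by
        refine Finset.sum_congr rfl fun i _ => ?_
        rw [Matrix.mul_apply, Finset.sum_mul]
        refine Finset.sum_congr rfl fun j _ => ?_
        rw [Matrix.mul_diagonal, ← hE.apply i j, star_trivial]
        ring
    _ ≤ (E * D * E * Y).trace :=
        sum_diag_mul_le_trace_mul (conj_posSemidef (Matrix.PosSemidef.diagonal hw₀)) hw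
    _ = (E * Y * E * D).trace := by
        rw [Matrix.mul_assoc, Matrix.trace_mul_comm, ← Matrix.mul_assoc]
    _ = ∑ i, (E * Y * E) i i * w i := by simp [D, Matrix.trace, Matrix.mul_diagonal]
    _ ≤ (E * Y * E * Y).trace := sum_diag_mul_le_trace_mul (conj_posSemidef hY) hw
    _ = (E * Y * (E * Y)).trace := by rw [Matrix.mul_assoc (E * Y)]

theorem exists_eq_conj_diagonal_eigenvalues {A : Matrix ι ι ℝ} (hA : A.IsHermitian) :
    ∃ P : (Matrix ι ι ℝ)ˣ,
      A = P.val * Matrix.diagonal hA.eigenvalues * P⁻¹.val :=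
  ⟨Unitary.toUnits hA.eigenvectorUnitary, hA.spectral_theorem⟩

theorem one_le_det_add_one_of_posSemidef {A : Matrix ι ι ℝ} (hA : A.PosSemidef) :
    1 ≤ (A + 1).det := by
  obtain ⟨P, hP⟩ := exists_eq_conj_diagonal_eigenvalues hA.1
  have hAP : A + 1 = P.val * (Matrix.diagonal hA.1.eigenvalues + 1) * P⁻¹.val := by
    rw [Matrix.mul_add, Matrix.add_mul, ← hP, Matrix.mul_one, Units.mul_inv]
  rw [hAP, Matrix.det_units_conj, ← Matrix.diagonal_one, Matrix.diagonal_add,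
    Matrix.det_diagonal]
  exact Finset.one_le_prod fun i _ => le_add_of_nonneg_left (hA.eigenvalues_nonneg i)

theorem exists_mul_eq_conj_diagonal_of_posDef {T Y : Matrix ι ι ℝ} (hT : T.PosDef)
    (hY : Y.PosDef) : ∃ (P : (Matrix ι ι ℝ)ˣ) (l : ι → ℝ), (∀ i, 0 < l i) ∧
      T * Y = P.val * Matrix.diagonal l * P⁻¹.val := by
  obtain ⟨B, hB⟩ := CStarAlgebra.nonneg_iff_eq_star_mul_self.mp hY.posSemidef.nonneg
  have hB_unit : IsUnit B := isUnit_of_mul_isUnit_right (hB ▸ hY.isUnit)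
  have hU : (B * T * star B).PosDef :=
    (Matrix.IsUnit.posDef_star_right_conjugate_iff hB_unit).mpr hT
  obtain ⟨P, hP⟩ := exists_eq_conj_diagonal_eigenvalues hU.1
  lift B to (Matrix ι ι ℝ)ˣ using hB_unit
  refine ⟨B⁻¹ * P, hU.1.eigenvalues, hU.eigenvalues_pos, ?_⟩
  calc T * Y = (B⁻¹ : (Matrix ι ι ℝ)ˣ) * (B * T * star (B : Matrix ι ι ℝ)) * B := by
        simp only [hB, Matrix.mul_assoc, Units.inv_mul_cancel_left]
    _ = _ := by
        rw [congrArg (_ * · * _) hP]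
        simp only [mul_inv_rev, inv_inv, Units.val_mul, Matrix.mul_assoc]

end PosDef

section SteinLoss

variable {ι : Type*} [Fintype ι] [DecidableEq ι]

/-- Stein's loss `tr U - log det U - n` of an `n × n` matrix, the log-determinant divergence of
`U` from the identity. On a matrix with positive spectrum it is the sum of the defects
`logDefect` of the eigenvalues; products of two positive definite matrices, rather than
symmetric matrices, are the intended arguments. -/
noncomputable def steinLoss (U : Matrix ι ι ℝ) : ℝ :=
  U.trace - Real.log U.det - Fintype.card ι

section Conj

variable (P : (Matrix ι ι ℝ)ˣ) (l : ι → ℝ)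

theorem log_det_conj_diagonal (hl : ∀ i, 0 < l i) :
    Real.log (P.val * Matrix.diagonal l * P⁻¹.val).det = ∑ i, Real.log (l i) := by
  rw [Matrix.det_units_conj, Matrix.det_diagonal, Real.log_prod fun i _ => (hl i).ne']

theorem steinLoss_conj_diagonal (hl : ∀ i, 0 < l i) :
    steinLoss (P.val * Matrix.diagonal l * P⁻¹.val) = ∑ i, logDefect (l i) := by
  rw [steinLoss, log_det_conj_diagonal P l hl, Matrix.trace_units_conj, Matrix.trace_diagonal]
  simp only [logDefect, Finset.sum_sub_distrib, Finset.sum_const, Finset.card_univ, nsmul_eq_mul,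
    mul_one]
  ring

theorem trace_sq_conj_diagonal_sub_one :
    ((P.val * Matrix.diagonal l * P⁻¹.val - 1) ^ 2).trace = ∑ i, (l i - 1) ^ 2 := by
  have hsub : P.val * Matrix.diagonal l * P⁻¹.val - 1 =
      P.val * Matrix.diagonal (fun i => l i - 1) * P⁻¹.val := by
    rw [← Matrix.diagonal_sub, Matrix.diagonal_one, Matrix.mul_sub, Matrix.sub_mul,
      Matrix.mul_one, Units.mul_inv]
  rw [hsub, Units.conj_pow, Matrix.diagonal_pow, Matrix.trace_units_conj, Matrix.trace_diagonal]
  rfl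

end Conj

section PosDef

variable {T Y : Matrix ι ι ℝ} (hT : T.PosDef) (hY : Y.PosDef)

include hT hY

theorem steinLoss_mul_nonneg : 0 ≤ steinLoss (T * Y) := by
  obtain ⟨P, l, hl, hTY⟩ := exists_mul_eq_conj_diagonal_of_posDef hT hY
  rw [hTY, steinLoss_conj_diagonal P l hl]
  exact Finset.sum_nonneg fun i _ => logDefect_nonneg (hl i)

theorem abs_log_det_mul_le_steinLoss_add_card :
    |Real.log (T * Y).det| ≤ steinLoss (T * Y) + Fintype.card ι := by
  obtain ⟨P, l, hl, hTY⟩ := exists_mul_eq_conj_diagonal_of_posDef hT hY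
  rw [hTY, steinLoss_conj_diagonal P l hl, log_det_conj_diagonal P l hl]
  calc |∑ i, Real.log (l i)| ≤ ∑ i, |Real.log (l i)| := Finset.abs_sum_le_sum_abs _ _
    _ ≤ ∑ i, (logDefect (l i) + 1) :=
        Finset.sum_le_sum fun i _ => abs_log_le_logDefect_add_one (hl i)
    _ = ∑ i, logDefect (l i) + Fintype.card ι := by simp [Finset.sum_add_distrib]

theorem trace_sq_le_steinLoss_or_trace_le_steinLoss :
    ((T * Y).trace ≤ 2 * Fintype.card ι ∧
      ((T * Y - 1) ^ 2).trace ≤ 5 * steinLoss (T * Y)) ∨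
    1 + (T * Y).trace ≤ 80 * (Fintype.card ι + 1) * steinLoss (T * Y) := by
  obtain ⟨P, l, hl, hTY⟩ := exists_mul_eq_conj_diagonal_of_posDef hT hY
  rw [hTY, trace_sq_conj_diagonal_sub_one, steinLoss_conj_diagonal P l hl,
    Matrix.trace_units_conj, Matrix.trace_diagonal]
  by_cases hnear : ∀ i, |l i - 1| ≤ 1 / 2
  · refine Or.inl ⟨?_, ?_⟩
    · calc ∑ i, l i ≤ ∑ _i : ι, (2 : ℝ) :=
            Finset.sum_le_sum fun i _ => by linarith [(abs_le.mp (hnear i)).2]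
        _ = 2 * Fintype.card ι := by simp [mul_comm]
    · rw [Finset.mul_sum]
      exact Finset.sum_le_sum fun i _ => sq_sub_one_le_five_mul_logDefect (hl i) (hnear i)
  · push Not at hnear
    obtain ⟨i, hi⟩ := hnear
    have hone : 1 ≤ 20 * ∑ j, logDefect (l j) :=
      (one_le_twenty_mul_logDefect (hl i) hi.le).trans <| by
        gcongr
        exact Finset.single_le_sum (f := fun j => logDefect (l j))
          (fun j _ => logDefect_nonneg (hl j)) (Finset.mem_univ i)
    have htrace : ∑ j, l j ≤ 4 * (∑ j, logDefect (l j) + Fintype.card ι) := by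
      calc ∑ j, l j ≤ ∑ j, 4 * (logDefect (l j) + 1) :=
            Finset.sum_le_sum fun j _ => le_four_mul_logDefect_add_one (hl j)
        _ = _ := by simp [← Finset.mul_sum, Finset.sum_add_distrib]
    exact Or.inr (by nlinarith [(Fintype.card ι).cast_nonneg (α := ℝ)])

end PosDef

theorem det_le_prod_diag_of_posSemidef {Y : Matrix ι ι ℝ} (hY : Y.PosSemidef) :
    Y.det ≤ ∏ i, Y i i := by
  by_cases hdet : Y.det = 0
  · exact hdet ▸ Finset.prod_nonneg fun i _ => hY.diag_nonneg
  have hYpos : Y.PosDef :=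
    hY.posDef_iff_isUnit.mpr ((Matrix.isUnit_iff_isUnit_det Y).mpr (Ne.isUnit hdet))
  set D := Matrix.diagonal fun i => (Y i i)⁻¹ with hD
  have hDpos : D.PosDef := Matrix.PosDef.diagonal fun i => inv_pos.mpr hYpos.diag_pos
  have htrace : (D * Y).trace = Fintype.card ι := by
    simp [hD, Matrix.trace, Matrix.diagonal_mul, hYpos.diag_pos.ne']
  have hlog : Real.log (D * Y).det ≤ 0 := by
    have h := steinLoss_mul_nonneg hDpos hYpos
    rw [steinLoss, htrace] at h
    linarith
  have hle : (D * Y).det ≤ 1 :=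
    (Real.log_nonpos_iff (Matrix.det_mul D Y ▸ (mul_pos hDpos.det_pos hYpos.det_pos).le)).mp hlog
  rwa [Matrix.det_mul, hD, Matrix.det_diagonal, Finset.prod_inv_distrib,
    inv_mul_le_one₀ (Finset.prod_pos fun i _ => hYpos.diag_pos)] at hle

end SteinLoss

section LatticeSums

theorem tsum_pi_prod_le_prod_tsum {ι α : Type*} [Fintype ι] (f : ι → α → ℝ≥0∞) :
    ∑' m : ι → α, ∏ i, f i (m i) ≤ ∏ i, ∑' z, f i z := by
  classical
  refine ENNReal.summable.tsum_le_of_sum_le fun s => ?_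
  set u : Finset α := s.biUnion fun m => Finset.univ.image m
  have hsub : s ⊆ Fintype.piFinset fun _ : ι => u := fun m hm =>
    Fintype.mem_piFinset.mpr fun i =>
      Finset.mem_biUnion.mpr ⟨m, hm, Finset.mem_image_of_mem _ (Finset.mem_univ i)⟩
  calc ∑ m ∈ s, ∏ i, f i (m i) ≤ ∑ m ∈ Fintype.piFinset fun _ : ι => u, ∏ i, f i (m i) :=
        Finset.sum_le_sum_of_subset hsub
    _ = ∏ i, ∑ z ∈ u, f i z := Finset.sum_prod_piFinset u f
    _ ≤ ∏ i, ∑' z, f i z := Finset.prod_le_prod' fun i _ => ENNReal.sum_le_tsum u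

variable {a b : ℝ}

theorem tsum_nat_exp_neg_mul_le (hb : 0 < b) :
    ∑' m : ℕ, ENNReal.ofReal (Real.exp (-(b * m))) ≤ ENNReal.ofReal (1 + b⁻¹) := by
  have hlt : Real.exp (-b) < 1 := Real.exp_lt_one_iff.mpr (neg_lt_zero.mpr hb)
  have hgeom : (1 - Real.exp (-b))⁻¹ ≤ 1 + b⁻¹ := by
    have hexp : Real.exp (-b) ≤ (b + 1)⁻¹ := by
      rw [Real.exp_neg]
      gcongr
      exact Real.add_one_le_exp b
    calc (1 - Real.exp (-b))⁻¹ ≤ (b / (b + 1))⁻¹ := by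
          gcongr
          calc b / (b + 1) = 1 - (b + 1)⁻¹ := by field_simp; ring
            _ ≤ 1 - Real.exp (-b) := by linarith
      _ = 1 + b⁻¹ := by field_simp
  calc ∑' m : ℕ, ENNReal.ofReal (Real.exp (-(b * m)))
      = ∑' m : ℕ, ENNReal.ofReal (Real.exp (-b)) ^ m := tsum_congr fun m => by
        rw [← ENNReal.ofReal_pow (Real.exp_nonneg _), ← Real.exp_nat_mul, mul_neg, mul_comm b]
    _ = ENNReal.ofReal (1 - Real.exp (-b))⁻¹ := by
        rw [ENNReal.tsum_geometric, ENNReal.ofReal_inv_of_pos (sub_pos.mpr hlt),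
          ENNReal.ofReal_sub _ (Real.exp_nonneg _), ENNReal.ofReal_one]
    _ ≤ ENNReal.ofReal (1 + b⁻¹) := ENNReal.ofReal_le_ofReal hgeom

theorem tsum_int_exp_neg_mul_abs_le (hb : 0 < b) :
    ∑' m : ℤ, ENNReal.ofReal (Real.exp (-(b * |(m : ℝ)|))) ≤ ENNReal.ofReal (2 * (1 + b⁻¹)) := by
  have hneg (m : ℕ) : ENNReal.ofReal (Real.exp (-(b * |((-(m + 1) : ℤ) : ℝ)|))) ≤
      ENNReal.ofReal (Real.exp (-(b * m))) := by
    gcongr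
    push_cast
    rw [abs_neg, abs_of_nonneg (by positivity)]
    linarith
  have hpos (m : ℕ) : ENNReal.ofReal (Real.exp (-(b * |((m : ℤ) : ℝ)|))) =
      ENNReal.ofReal (Real.exp (-(b * m))) := by simp
  rw [tsum_of_nat_of_neg_add_one ENNReal.summable ENNReal.summable, two_mul,
    ENNReal.ofReal_add (by positivity) (by positivity)]
  exact add_le_add ((tsum_congr hpos).trans_le (tsum_nat_exp_neg_mul_le hb))
    ((ENNReal.tsum_le_tsum hneg).trans (tsum_nat_exp_neg_mul_le hb))

theorem abs_sub_round_le_two_mul (m : ℤ) (e : ℝ) : |((m - round e : ℤ) : ℝ)| ≤ 2 * |m - e| := by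
  have hround : |e - round e| ≤ |m - e| := by
    simpa only [abs_sub_comm] using round_le e m
  push_cast
  linarith [abs_sub_le (m : ℝ) e (round e)]

theorem tsum_int_gaussian_le (ha : 0 < a) (e : ℝ) :
    ∑' m : ℤ, ENNReal.ofReal (Real.exp (-(a * (m - e) ^ 2))) ≤
      ENNReal.ofReal (2 * Real.exp (1 / 4) * (1 + 2 / √a)) := by
  have hsqrt : 0 < √a := Real.sqrt_pos.mpr ha
  have hterm (m : ℤ) : Real.exp (-(a * (m - e) ^ 2)) ≤
      Real.exp (1 / 4) * Real.exp (-(√a / 2 * |((m - round e : ℤ) : ℝ)|)) := by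
    rw [← Real.exp_add]
    gcongr
    have hsq : a * (m - e) ^ 2 = (√a * |m - e|) ^ 2 := by
      rw [mul_pow, Real.sq_sqrt ha.le, sq_abs]
    have hround := mul_le_mul_of_nonneg_left (abs_sub_round_le_two_mul m e) hsqrt.le
    linarith [sq_nonneg (√a * |m - e| - 1 / 2)]
  calc ∑' m : ℤ, ENNReal.ofReal (Real.exp (-(a * (m - e) ^ 2)))
      ≤ ∑' m : ℤ, ENNReal.ofReal (Real.exp (1 / 4)) *
          ENNReal.ofReal (Real.exp (-(√a / 2 * |((m - round e : ℤ) : ℝ)|))) :=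
        ENNReal.tsum_le_tsum fun m => by
          rw [← ENNReal.ofReal_mul (Real.exp_nonneg _)]
          exact ENNReal.ofReal_le_ofReal (hterm m)
    _ = ENNReal.ofReal (Real.exp (1 / 4)) *
          ∑' m : ℤ, ENNReal.ofReal (Real.exp (-(√a / 2 * |(m : ℝ)|))) := by
        rw [ENNReal.tsum_mul_left]
        congr 1
        exact (Equiv.subRight (round e)).tsum_eq
          fun m : ℤ => ENNReal.ofReal (Real.exp (-(√a / 2 * |(m : ℝ)|)))
    _ ≤ ENNReal.ofReal (Real.exp (1 / 4)) * ENNReal.ofReal (2 * (1 + (√a / 2)⁻¹)) := by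
        gcongr
        exact tsum_int_exp_neg_mul_abs_le (half_pos hsqrt)
    _ = ENNReal.ofReal (2 * Real.exp (1 / 4) * (1 + 2 / √a)) := by
        rw [← ENNReal.ofReal_mul (Real.exp_nonneg _), inv_div]
        congr 1
        ring

end LatticeSums

section UpperPair

/-- The positions on and above the diagonal of a square matrix, which carry the free entries of
a symmetric matrix. -/
abbrev UpperPair (ι : Type*) [LE ι] := {p : ι × ι // p.1 ≤ p.2}

namespace UpperPair

variable {ι : Type*} [Fintype ι] [LinearOrder ι]

theorem sum_le_sum_sum {f : ι → ι → ℝ} (hf : ∀ i j, 0 ≤ f i j) :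
    ∑ p : UpperPair ι, f p.1.1 p.1.2 ≤ ∑ i, ∑ j, f i j := by
  rw [← Fintype.sum_prod_type' (f := f),
    ← Finset.sum_subtype (Finset.univ.filter fun p : ι × ι => p.1 ≤ p.2) (by simp)
      (fun p : ι × ι => f p.1 p.2)]
  exact Finset.sum_le_sum_of_subset_of_nonneg (Finset.filter_subset _ _) fun p _ _ => hf _ _

theorem card_filter_le_add_card_filter_ge (i : ι) :
    (Finset.univ.filter (i ≤ ·)).card + (Finset.univ.filter (· ≤ i)).card =
      Fintype.card ι + 1 := by
  have hinter : Finset.univ.filter (i ≤ ·) ∩ Finset.univ.filter (· ≤ i) = {i} := by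
    ext j
    simp [le_antisymm_iff, and_comm]
  have hunion : Finset.univ.filter (i ≤ ·) ∪ Finset.univ.filter (· ≤ i) = Finset.univ := by
    ext j
    simp [le_total]
  rw [← Finset.card_union_add_card_inter, hinter, hunion, Finset.card_univ,
    Finset.card_singleton]

@[to_additive]
theorem prod_mul {M : Type*} [CommMonoid M] (g : ι → M) :
    ∏ p : UpperPair ι, g p.1.1 * g p.1.2 = ∏ i, g i ^ (Fintype.card ι + 1) := by
  rw [← Finset.prod_subtype (Finset.univ.filter fun p : ι × ι => p.1 ≤ p.2) (by simp)
    (fun p : ι × ι => g p.1 * g p.2), Finset.prod_mul_distrib, Finset.prod_filter,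
    Finset.prod_filter, Fintype.prod_prod_type, Fintype.prod_prod_type_right,
    ← Finset.prod_mul_distrib]
  refine Finset.prod_congr rfl fun i _ => ?_
  rw [← card_filter_le_add_card_filter_ge i, pow_add, ← Finset.prod_const, ← Finset.prod_const,
    Finset.prod_filter, Finset.prod_filter]

end UpperPair

end UpperPair

section HalfIntegral

variable {n : ℕ}

theorem exists_injective_upperEntries (n : ℕ) :
    ∃ F : Lambda n → UpperPair (Fin n) → ℤ, Function.Injective F ∧
      ∀ T p, (F T p : ℝ) = 2 * T.1 p.1.1 p.1.2 := by
  choose Z hZ using fun T : Lambda n => T.2.2.2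
  refine ⟨fun T p => Z T p.1.1 p.1.2, fun T S h => ?_, fun T p => (hZ T p.1.1 p.1.2).symm⟩
  have hupper {i j} (hij : i ≤ j) : T.1 i j = S.1 i j := by
    have hZ_eq : Z T i j = Z S i j := congrFun h ⟨(i, j), hij⟩
    have hS := hZ S i j
    rw [← hZ_eq, ← hZ T i j] at hS
    linarith
  have hsymm (R : Lambda n) (i j) : R.1 j i = R.1 i j := by simpa using R.2.1.1.apply i j
  refine Subtype.ext (Matrix.ext fun i j => ?_)
  rcases le_total i j with hij | hji
  · exact hupper hij
  · rw [← hsymm T, ← hsymm S, hupper hji]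

theorem tsum_lambda_prod_le_prod_tsum (f : UpperPair (Fin n) → ℝ → ℝ≥0∞) :
    ∑' T : Lambda n, ∏ p : UpperPair (Fin n), f p (2 * T.1 p.1.1 p.1.2) ≤
      ∏ p, ∑' z : ℤ, f p z := by
  obtain ⟨F, hF, hF_apply⟩ := exists_injective_upperEntries n
  simp only [← hF_apply]
  exact (ENNReal.tsum_comp_le_tsum_of_injective hF fun m => ∏ p, f p (m p)).trans
    (tsum_pi_prod_le_prod_tsum fun p (z : ℤ) => f p z)

theorem one_le_diag (T : Lambda n) (i : Fin n) : 1 ≤ T.1 i i := by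
  obtain ⟨z, hz⟩ := T.2.2.1 i
  have hpos := T.2.1.diag_pos (i := i)
  rw [hz] at hpos ⊢
  exact_mod_cast hpos

theorem tsum_lambda_exp_neg_sum_le (f : UpperPair (Fin n) → ℝ → ℝ) {B : UpperPair (Fin n) → ℝ}
    (hB : ∀ p, 0 ≤ B p)
    (h : ∀ p, ∑' z : ℤ, ENNReal.ofReal (Real.exp (-f p z)) ≤ ENNReal.ofReal (B p)) :
    ∑' T : Lambda n, ENNReal.ofReal (Real.exp (-∑ p, f p (2 * T.1 p.1.1 p.1.2))) ≤
      ENNReal.ofReal (∏ p, B p) := by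
  simp only [← Finset.sum_neg_distrib, Real.exp_sum]
  simp only [ENNReal.ofReal_prod_of_nonneg fun _ _ => Real.exp_nonneg _,
    ENNReal.ofReal_prod_of_nonneg fun p _ => hB p]
  exact (tsum_lambda_prod_le_prod_tsum fun p x => ENNReal.ofReal (Real.exp (-f p x))).trans
    (Finset.prod_le_prod' fun p _ => h p)

theorem sum_abs_upperEntries_le {T : Matrix (Fin n) (Fin n) ℝ} (hT : T.PosSemidef) :
    ∑ p : UpperPair (Fin n), |2 * T p.1.1 p.1.2| ≤ (n + 1) * ∑ i, T i i :=
  calc ∑ p : UpperPair (Fin n), |2 * T p.1.1 p.1.2|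
      ≤ ∑ p : UpperPair (Fin n), (T p.1.1 p.1.1 + T p.1.2 p.1.2) :=
        Finset.sum_le_sum fun p _ => by
          rw [abs_mul, abs_two]
          linarith [abs_apply_le_of_posSemidef hT p.1.1 p.1.2]
    _ = (n + 1) * ∑ i, T i i := by
        rw [UpperPair.sum_add fun i => T i i, Finset.mul_sum]
        simp

theorem exists_tsum_exp_neg_sum_diag_mul_le (n : ℕ) {c : ℝ} (hc : 0 < c) :
    ∃ K : ℝ, 0 < K ∧ ∀ y : Fin n → ℝ, 1 ≤ y →
      ∑' T : Lambda n, ENNReal.ofReal (Real.exp (-(c * ∑ i, T.1 i i * y i))) ≤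
        ENNReal.ofReal (K * Real.exp (-(c / 2 * ∑ i, y i))) := by
  set b := c / (2 * (n + 1)) with hb
  have hb_pos : 0 < b := by positivity
  refine ⟨∏ _p : UpperPair (Fin n), 2 * (1 + b⁻¹), by positivity, fun y hy => ?_⟩
  have hterm (T : Lambda n) : Real.exp (-(c * ∑ i, T.1 i i * y i)) ≤
      Real.exp (-(c / 2 * ∑ i, y i)) *
        Real.exp (-∑ p : UpperPair (Fin n), b * |2 * T.1 p.1.1 p.1.2|) := by
    have hsplit : ∑ i, y i + ∑ i, T.1 i i ≤ 2 * ∑ i, T.1 i i * y i := by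
      rw [← Finset.sum_add_distrib, Finset.mul_sum]
      refine Finset.sum_le_sum fun i _ => ?_
      nlinarith [one_le_diag T i, show (1 : ℝ) ≤ y i from hy i]
    have hentries := mul_le_mul_of_nonneg_left
      (sum_abs_upperEntries_le T.2.1.posSemidef) hb_pos.le
    have hb_mul : b * ((n + 1) * ∑ i, T.1 i i) = c / 2 * ∑ i, T.1 i i := by
      rw [hb]
      field_simp
    rw [← Real.exp_add, ← Finset.mul_sum]
    gcongr
    nlinarith
  calc ∑' T : Lambda n, ENNReal.ofReal (Real.exp (-(c * ∑ i, T.1 i i * y i)))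
      ≤ ∑' T : Lambda n, ENNReal.ofReal (Real.exp (-(c / 2 * ∑ i, y i))) *
          ENNReal.ofReal (Real.exp (-∑ p : UpperPair (Fin n), b * |2 * T.1 p.1.1 p.1.2|)) :=
        ENNReal.tsum_le_tsum fun T => by
          rw [← ENNReal.ofReal_mul (Real.exp_nonneg _)]
          exact ENNReal.ofReal_le_ofReal (hterm T)
    _ ≤ ENNReal.ofReal (Real.exp (-(c / 2 * ∑ i, y i))) *
          ENNReal.ofReal (∏ _p : UpperPair (Fin n), 2 * (1 + b⁻¹)) := by
        rw [ENNReal.tsum_mul_left]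
        gcongr
        exact tsum_lambda_exp_neg_sum_le (fun _ x => b * |x|) (fun _ => by positivity)
          fun _ => tsum_int_exp_neg_mul_abs_le hb_pos
    _ = _ := by rw [← ENNReal.ofReal_mul (Real.exp_nonneg _), mul_comm]

theorem one_add_two_div_sqrt_le {c D k u v : ℝ} (hc : 0 < c) (hD : 0 < D) (hk : 0 < k)
    (hu : 1 ≤ u) (hv : 1 ≤ v) (huD : u ≤ D * k) (hvD : v ≤ D * k) :
    1 + 2 / √(c / (4 * k) * (u * v)) ≤
      (√D + 4 / √c) * ((k / u) ^ (1 / 4 : ℝ) * (k / v) ^ (1 / 4 : ℝ)) := by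
  have hu₀ : 0 < u := by linarith
  have hv₀ : 0 < v := by linarith
  set G := (k / u) ^ (1 / 4 : ℝ) * (k / v) ^ (1 / 4 : ℝ) with hG
  have hG_eq : G = √√(k / u * (k / v)) := by
    rw [hG, ← Real.mul_rpow (by positivity) (by positivity), Real.sqrt_eq_rpow,
      Real.sqrt_eq_rpow, ← Real.rpow_mul (by positivity)]
    norm_num
  have hone : 1 ≤ √D * G := by
    have hD_inv {w : ℝ} (hw : 0 < w) (hwD : w ≤ D * k) : 1 ≤ D * (k / w) := by
      rwa [mul_div_assoc', one_le_div hw]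
    have hsq : 1 ≤ D * √(k / u * (k / v)) := by
      rw [← Real.sqrt_sq hD.le, ← Real.sqrt_mul (sq_nonneg D), Real.one_le_sqrt]
      nlinarith [hD_inv hu₀ huD, hD_inv hv₀ hvD]
    rw [hG_eq, ← Real.sqrt_mul hD.le]
    exact Real.one_le_sqrt.mpr hsq
  have htwo : 2 / √(c / (4 * k) * (u * v)) ≤ 4 / √c * G := by
    have hle : k / (u * v) ≤ √(k / u * (k / v)) := by
      refine Real.le_sqrt_of_sq_le ?_
      rw [div_mul_div_comm, div_pow, ← sq]
      gcongr
      exact le_self_pow₀ (by nlinarith) two_ne_zero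
    calc 2 / √(c / (4 * k) * (u * v)) = 2 * √(4 / c * (k / (u * v))) := by
          rw [div_eq_mul_inv, ← Real.sqrt_inv]
          congr 2
          field_simp
      _ ≤ 2 * √(4 / c * √(k / u * (k / v))) := by gcongr
      _ = 4 / √c * G := by
          rw [Real.sqrt_mul (by positivity), Real.sqrt_div (by norm_num), hG_eq,
            show (4 : ℝ) = 2 ^ 2 by norm_num, Real.sqrt_sq (by norm_num)]
          ring
  linarith

theorem prod_upperPair_rpow_one_fourth {k : ℝ} {y : Fin n → ℝ} (hk : 0 ≤ k) (hy : 0 ≤ y) :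
    ∏ p : UpperPair (Fin n), (k / y p.1.1) ^ (1 / 4 : ℝ) * (k / y p.1.2) ^ (1 / 4 : ℝ) =
      (k ^ n / ∏ i, y i) ^ (((n : ℝ) + 1) / 4) := by
  rw [UpperPair.prod_mul fun i => (k / y i) ^ (1 / 4 : ℝ), Finset.prod_pow,
    Real.finsetProd_rpow _ _ fun i _ => div_nonneg hk (hy i), ← Real.rpow_mul_natCast
      (Finset.prod_nonneg fun i _ => div_nonneg hk (hy i)), Finset.prod_div_distrib,
    Finset.prod_const, Finset.card_univ, Fintype.card_fin]
  congr 1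
  push_cast
  ring

theorem exists_tsum_gaussian_le (n : ℕ) {c D : ℝ} (hc : 0 < c) (hD : 0 < D) :
    ∃ C : ℝ, 0 < C ∧ ∀ (k : ℝ) (y : Fin n → ℝ) (E : Matrix (Fin n) (Fin n) ℝ), 0 < k →
      1 ≤ y → (∀ i, y i ≤ D * k) →
      ∑' T : Lambda n,
          ENNReal.ofReal (Real.exp (-(c / k * ∑ i, ∑ j, y i * y j * (T.1 - E) i j ^ 2))) ≤
        ENNReal.ofReal (C * (k ^ n / ∏ i, y i) ^ (((n : ℝ) + 1) / 4)) := by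
  set B := 2 * Real.exp (1 / 4) * (√D + 4 / √c)
  refine ⟨∏ _p : UpperPair (Fin n), B, by positivity, fun k y E hk hy hyD => ?_⟩
  have hy_pos (i) : 0 < y i := zero_lt_one.trans_le (hy i)
  have hrpow (i) : 0 ≤ (k / y i) ^ (1 / 4 : ℝ) := Real.rpow_nonneg (div_pos hk (hy_pos i)).le _
  set f : UpperPair (Fin n) → ℝ → ℝ := fun p x =>
    c / (4 * k) * (y p.1.1 * y p.1.2) * (x - 2 * E p.1.1 p.1.2) ^ 2
  have hf (T : Lambda n) : ∑ p, f p (2 * T.1 p.1.1 p.1.2) ≤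
      c / k * ∑ i, ∑ j, y i * y j * (T.1 - E) i j ^ 2 := by
    refine le_trans (le_of_eq ?_) (mul_le_mul_of_nonneg_left
      (UpperPair.sum_le_sum_sum (f := fun i j => y i * y j * (T.1 - E) i j ^ 2) fun i j =>
        mul_nonneg (mul_pos (hy_pos i) (hy_pos j)).le (sq_nonneg _)) (div_pos hc hk).le)
    rw [Finset.mul_sum]
    refine Finset.sum_congr rfl fun p _ => ?_
    simp only [f, Matrix.sub_apply]
    field_simp
    ring
  rw [← prod_upperPair_rpow_one_fourth hk.le fun i => (hy_pos i).le, ← Finset.prod_mul_distrib]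
  refine (ENNReal.tsum_le_tsum fun T => ENNReal.ofReal_le_ofReal <|
    Real.exp_le_exp.mpr <| neg_le_neg (hf T)).trans <|
    tsum_lambda_exp_neg_sum_le f (fun p => ?_) fun p => ?_
  · exact mul_nonneg (by positivity) (mul_nonneg (hrpow _) (hrpow _))
  · have ha : 0 < c / (4 * k) * (y p.1.1 * y p.1.2) :=
      mul_pos (by positivity) (mul_pos (hy_pos _) (hy_pos _))
    refine (tsum_int_gaussian_le ha _).trans (ENNReal.ofReal_le_ofReal ?_)
    exact (mul_le_mul_of_nonneg_left (one_add_two_div_sqrt_le hc hD hk (hy _) (hy _)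
      (hyD _) (hyD _)) (by positivity)).trans_eq (mul_assoc _ _ _).symm

end HalfIntegral

section CentralEstimate

variable {n : ℕ} {r : ℝ} {T Y : Matrix (Fin n) (Fin n) ℝ}

theorem posSemidef_sub_diagonal_of_loewnerLE (h : LoewnerLE (r⁻¹ • diagPart Y) Y) :
    (Y - Matrix.diagonal fun i => r⁻¹ * Y i i).PosSemidef := by
  rwa [LoewnerLE, diagPart, ← Matrix.diagonal_smul] at h

theorem inv_mul_sum_diag_mul_diag_le_trace_mul (hT : T.PosSemidef)
    (h : LoewnerLE (r⁻¹ • diagPart Y) Y) : r⁻¹ * ∑ i, T i i * Y i i ≤ (T * Y).trace := by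
  simpa only [Finset.mul_sum, mul_left_comm] using
    sum_diag_mul_le_trace_mul hT (posSemidef_sub_diagonal_of_loewnerLE h)

theorem inv_sq_mul_sum_sum_le_trace_sq (hT : T.IsHermitian) (hr : 0 < r) (hY : Y.PosDef)
    (h : LoewnerLE (r⁻¹ • diagPart Y) Y) :
    r⁻¹ ^ 2 * ∑ i, ∑ j, Y i i * Y j j * (T - Y⁻¹) i j ^ 2 ≤ ((T * Y - 1) ^ 2).trace := by
  have hfactor : T * Y - 1 = (T - Y⁻¹) * Y := by
    rw [Matrix.sub_mul, Matrix.nonsing_inv_mul Y hY.det_pos.ne'.isUnit]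
  rw [hfactor, sq (_ * Y)]
  calc r⁻¹ ^ 2 * ∑ i, ∑ j, Y i i * Y j j * (T - Y⁻¹) i j ^ 2
      = ∑ i, ∑ j, r⁻¹ * Y i i * (r⁻¹ * Y j j) * (T - Y⁻¹) i j ^ 2 := by
        simp only [Finset.mul_sum]
        refine Finset.sum_congr rfl fun i _ => Finset.sum_congr rfl fun j _ => ?_
        ring
    _ ≤ ((T - Y⁻¹) * Y * ((T - Y⁻¹) * Y)).trace :=
        sum_mul_mul_sq_le_trace_mul_mul_mul (hT.sub hY.1.inv) hY.posSemidef
          (fun i => mul_nonneg (inv_pos.mpr hr).le hY.diag_pos.le)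
          (posSemidef_sub_diagonal_of_loewnerLE h)

theorem gaussian_le_steinLoss_or_trace_le_steinLoss {t : ℝ} (ht : 0 < t) (hr : 0 < r)
    (T : Lambda n) (hY : Y.PosDef) (h : LoewnerLE (r⁻¹ • diagPart Y) Y) :
    ((∀ i, t * Y i i ≤ 2 * n * r) ∧
      (t / r) ^ 2 * ∑ i, ∑ j, Y i i * Y j j * (T.1 - t⁻¹ • Y⁻¹) i j ^ 2 ≤
        5 * steinLoss (t • T.1 * Y)) ∨
    1 + t / r * ∑ i, T.1 i i * Y i i ≤ 80 * (n + 1) * steinLoss (t • T.1 * Y) := by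
  have htT : (t • T.1).PosDef := T.2.1.smul ht
  have hdiag : t / r * ∑ i, T.1 i i * Y i i ≤ (t • T.1 * Y).trace := by
    refine le_of_eq_of_le ?_ (inv_mul_sum_diag_mul_diag_le_trace_mul htT.posSemidef h)
    simp only [Finset.mul_sum, Matrix.smul_apply, smul_eq_mul]
    refine Finset.sum_congr rfl fun i _ => ?_
    field_simp
  rcases trace_sq_le_steinLoss_or_trace_le_steinLoss htT hY with ⟨htrace, hsq⟩ | hfar
  · refine Or.inl ⟨fun i => ?_, ?_⟩
    · rw [Fintype.card_fin] at htrace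
      have hYi : Y i i ≤ ∑ j, T.1 j j * Y j j :=
        (le_mul_of_one_le_left hY.diag_pos.le (one_le_diag T i)).trans <|
          Finset.single_le_sum (f := fun j => T.1 j j * Y j j)
            (fun j _ => (mul_pos T.2.1.diag_pos hY.diag_pos).le) (Finset.mem_univ i)
      rw [← div_le_iff₀ hr, ← div_mul_eq_mul_div]
      exact ((mul_le_mul_of_nonneg_left hYi (div_pos ht hr).le).trans hdiag).trans htrace
    · refine le_trans (le_of_eq_of_le ?_ (inv_sq_mul_sum_sum_le_trace_sq htT.1 hr hY h)) hsq
      simp only [Finset.mul_sum, Matrix.sub_apply, Matrix.smul_apply, smul_eq_mul]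
      refine Finset.sum_congr rfl fun i _ => Finset.sum_congr rfl fun j _ => ?_
      field_simp
  · rw [Fintype.card_fin] at hfar
    exact Or.inr (by linarith)

theorem gaussian_le_mul_steinLoss_or_trace_le_mul_steinLoss {k : ℝ} (hk : 0 < k) (hr : 0 < r)
    (T : Lambda n) (hY : Y.PosDef) (h : LoewnerLE (r⁻¹ • diagPart Y) Y) :
    ((∀ i, Y i i ≤ (n + 1) * r * k) ∧
      4 * π ^ 2 / (5 * r ^ 2) / k *
          ∑ i, ∑ j, Y i i * Y j j * (T.1 - (4 * π / k)⁻¹ • Y⁻¹) i j ^ 2 ≤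
        k / 4 * steinLoss ((4 * π / k) • T.1 * Y)) ∨
    1 / (320 * (n + 1)) * k + π / (80 * (n + 1) * r) * ∑ i, T.1 i i * Y i i ≤
      k / 4 * steinLoss ((4 * π / k) • T.1 * Y) := by
  have ht : 0 < 4 * π / k := by positivity
  rcases gaussian_le_steinLoss_or_trace_le_steinLoss ht hr T hY h with ⟨hdiag, hgauss⟩ | hfar
  · refine Or.inl ⟨fun i => ?_, ?_⟩
    · have hi := hdiag i
      rw [div_mul_eq_mul_div, div_le_iff₀ hk] at hi
      nlinarith [Real.pi_gt_three, hY.diag_pos (i := i), mul_pos hr hk]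
    · generalize ∑ i, ∑ j, Y i i * Y j j * (T.1 - (4 * π / k)⁻¹ • Y⁻¹) i j ^ 2 = S at hgauss ⊢
      calc 4 * π ^ 2 / (5 * r ^ 2) / k * S = k / 20 * ((4 * π / k / r) ^ 2 * S) := by
            field_simp
            ring
        _ ≤ k / 20 * (5 * steinLoss ((4 * π / k) • T.1 * Y)) := by gcongr
        _ = k / 4 * steinLoss ((4 * π / k) • T.1 * Y) := by ring
  · refine Or.inr ?_
    generalize ∑ i, T.1 i i * Y i i = S at hfar ⊢
    calc 1 / (320 * (n + 1)) * k + π / (80 * (n + 1) * r) * S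
        = k / (320 * (n + 1)) * (1 + 4 * π / k / r * S) := by
          field_simp
          ring
      _ ≤ k / (320 * (n + 1)) * (80 * (n + 1) * steinLoss ((4 * π / k) • T.1 * Y)) := by gcongr
      _ = k / 4 * steinLoss ((4 * π / k) • T.1 * Y) := by
          field_simp
          ring

theorem tsum_exp_neg_le_of_forall_or {α : Type*} {φ γ τ : α → ℝ} {p : Prop} {δ G H : ℝ}
    (hG : 0 ≤ G) (hH : 0 ≤ H) (h : ∀ x, (p ∧ γ x ≤ φ x) ∨ δ + τ x ≤ φ x)
    (hγ : p → ∑' x, ENNReal.ofReal (Real.exp (-γ x)) ≤ ENNReal.ofReal G)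
    (hτ : ∑' x, ENNReal.ofReal (Real.exp (-τ x)) ≤ ENNReal.ofReal H) :
    ∑' x, ENNReal.ofReal (Real.exp (-φ x)) ≤ ENNReal.ofReal (G + Real.exp (-δ) * H) := by
  have hfar {x} (hx : δ + τ x ≤ φ x) : ENNReal.ofReal (Real.exp (-φ x)) ≤
      ENNReal.ofReal (Real.exp (-δ)) * ENNReal.ofReal (Real.exp (-τ x)) := by
    rw [← ENNReal.ofReal_mul (Real.exp_nonneg _), ← Real.exp_add]
    gcongr
    linarith
  have hfar_sum : ∑' x, ENNReal.ofReal (Real.exp (-δ)) * ENNReal.ofReal (Real.exp (-τ x)) ≤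
      ENNReal.ofReal (Real.exp (-δ) * H) := by
    rw [ENNReal.tsum_mul_left, ENNReal.ofReal_mul (Real.exp_nonneg _)]
    gcongr
  by_cases hp : p
  · have hterm (x) : ENNReal.ofReal (Real.exp (-φ x)) ≤ ENNReal.ofReal (Real.exp (-γ x)) +
        ENNReal.ofReal (Real.exp (-δ)) * ENNReal.ofReal (Real.exp (-τ x)) := by
      rcases h x with ⟨-, hx⟩ | hx
      · exact le_add_right (ENNReal.ofReal_le_ofReal (Real.exp_le_exp.mpr (neg_le_neg hx)))
      · exact le_add_left (hfar hx)
    refine (ENNReal.tsum_le_tsum hterm).trans ?_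
    rw [ENNReal.tsum_add, ENNReal.ofReal_add hG (by positivity)]
    exact add_le_add (hγ hp) hfar_sum
  · refine (ENNReal.tsum_le_tsum fun x => hfar ((h x).resolve_left fun hx => hp hx.1)).trans
      (hfar_sum.trans ?_)
    gcongr
    exact le_add_of_nonneg_left hG

theorem exists_tsum_exp_neg_steinLoss_le (n : ℕ) (hr : 0 < r) :
    ∃ C : ℝ, 0 < C ∧ ∃ δ : ℝ, 0 < δ ∧ ∃ c : ℝ, 0 < c ∧
      ∀ (k : ℝ) (Y : Matrix (Fin n) (Fin n) ℝ), 0 < k → Y.PosDef → (∀ i, 1 ≤ Y i i) →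
        LoewnerLE (r⁻¹ • diagPart Y) Y →
        ∑' T : Lambda n,
            ENNReal.ofReal (Real.exp (-(k / 4 * steinLoss ((4 * π / k) • T.1 * Y)))) ≤
          ENNReal.ofReal (C * ((k ^ n / Y.det) ^ (((n : ℝ) + 1) / 4) +
            Real.exp (-(δ * k)) * Real.exp (-(c * Y.trace)))) := by
  set δ : ℝ := 1 / (320 * (n + 1))
  set c₂ := π / (80 * (n + 1) * r)
  have hc₂ : 0 < c₂ := by positivity
  obtain ⟨C, hC, hgauss⟩ := exists_tsum_gaussian_le n (c := 4 * π ^ 2 / (5 * r ^ 2))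
    (D := (n + 1) * r) (by positivity) (by positivity)
  obtain ⟨K, hK, htail⟩ := exists_tsum_exp_neg_sum_diag_mul_le n hc₂
  refine ⟨C + K, by positivity, δ, by positivity, c₂ / 2, half_pos hc₂,
    fun k Y hk hY hdiag h => ?_⟩
  have hprod : 0 ≤ (k ^ n / ∏ i, Y i i) ^ (((n : ℝ) + 1) / 4) := Real.rpow_nonneg
    (div_nonneg (pow_nonneg hk.le n) (Finset.prod_nonneg fun i _ => hY.diag_pos.le)) _
  have hdet : (k ^ n / ∏ i, Y i i) ^ (((n : ℝ) + 1) / 4) ≤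
      (k ^ n / Y.det) ^ (((n : ℝ) + 1) / 4) := by
    have hdet_pos := hY.det_pos
    gcongr
    · exact div_nonneg (pow_nonneg hk.le n) (Finset.prod_nonneg fun i _ => hY.diag_pos.le)
    · exact det_le_prod_diag_of_posSemidef hY.posSemidef
  refine (tsum_exp_neg_le_of_forall_or (δ := δ * k) (mul_nonneg hC.le hprod)
    (mul_nonneg hK.le (Real.exp_nonneg _))
    (fun T => gaussian_le_mul_steinLoss_or_trace_le_mul_steinLoss hk hr T hY h)
    (hgauss k (fun i => Y i i) _ hk hdiag) (htail (fun i => Y i i) hdiag)).trans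
    (ENNReal.ofReal_le_ofReal ?_)
  calc _ ≤ C * (k ^ n / Y.det) ^ (((n : ℝ) + 1) / 4) +
        Real.exp (-(δ * k)) * (K * Real.exp (-(c₂ / 2 * Y.trace))) := by
        gcongr
        rfl
    _ ≤ _ := by
        have hexp : 0 ≤ Real.exp (-(δ * k)) * Real.exp (-(c₂ / 2 * Y.trace)) := by positivity
        linarith [mul_nonneg hK.le (hprod.trans hdet), mul_nonneg hC.le hexp]

end CentralEstimate

section TermBound

variable {n k : ℕ} {α β A : ℝ} {T Y : Matrix (Fin n) (Fin n) ℝ}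

theorem log_det_smul_mul {t : ℝ} (ht : 0 < t) (hT : T.PosDef) (hY : Y.PosDef) :
    Real.log (t • T * Y).det = n * Real.log t + Real.log T.det + Real.log Y.det := by
  rw [Matrix.det_mul, Matrix.det_smul, Fintype.card_fin,
    Real.log_mul (mul_pos (pow_pos ht n) hT.det_pos).ne' hY.det_pos.ne',
    Real.log_mul (pow_pos ht n).ne' hT.det_pos.ne', Real.log_pow]

theorem two_pi_mul_trace_mul_eq (hk : k ≠ 0) :
    2 * π * (T * Y).trace = k / 2 * (steinLoss ((4 * π / k : ℝ) • T * Y) + n +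
      Real.log ((4 * π / k : ℝ) • T * Y).det) := by
  rw [steinLoss, Fintype.card_fin, Matrix.smul_mul, Matrix.trace_smul, smul_eq_mul]
  field_simp
  ring

theorem admissible_term_le (hk : k ≠ 0) (hA : 0 ≤ A) (hT : T.PosDef) (hY : Y.PosDef) :
    A * (4 * π) ^ ((n * k : ℝ) / 2) * (k : ℝ) ^ α * T.det ^ ((k : ℝ) / 2 - β) /
        Real.Gamma k ^ ((n : ℝ) / 2) * Y.det ^ ((k : ℝ) / 2) *
        Real.exp (-2 * π * (T * Y).trace) ≤
      A * (4 * π) ^ (n * β) * (((k : ℝ) ^ n / Y.det) ^ (-β) * (k : ℝ) ^ ((n : ℝ) / 4 + α)) *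
        (((4 * π / k : ℝ) • T * Y).det ^ (-β) *
          Real.exp (-(k / 2 * steinLoss ((4 * π / k : ℝ) • T * Y)))) := by
  have hk_pos : (0 : ℝ) < k := by positivity
  have hpi : (0 : ℝ) < 4 * π := by positivity
  have hΓ : 0 < Real.Gamma k := Real.Gamma_pos_of_pos hk_pos
  have hU : 0 < ((4 * π / k : ℝ) • T * Y).det := by
    rw [Matrix.det_mul]
    exact mul_pos (hT.smul (by positivity)).det_pos hY.det_pos
  have hstirling : ((k - 1 / 2 : ℝ) * Real.log k - k) * (n / 2) ≤
      Real.log (Real.Gamma k) * (n / 2) := by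
    gcongr
    exact le_log_Gamma_natCast hk
  have hlog_det := log_det_smul_mul (div_pos hpi hk_pos) hT hY
  have htrace := two_pi_mul_trace_mul_eq (T := T) (Y := Y) hk
  rw [Real.log_div hpi.ne' hk_pos.ne'] at hlog_det
  rw [div_eq_mul_inv _ (Real.Gamma k ^ _), ← Real.rpow_neg hΓ.le]
  simp only [Real.rpow_def_of_pos hpi, Real.rpow_def_of_pos hk_pos,
    Real.rpow_def_of_pos hT.det_pos, Real.rpow_def_of_pos hY.det_pos, Real.rpow_def_of_pos hΓ,
    Real.rpow_def_of_pos hU, Real.rpow_def_of_pos (div_pos (pow_pos hk_pos n) hY.det_pos),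
    Real.log_div (pow_pos hk_pos n).ne' hY.det_pos.ne', Real.log_pow]
  simp only [mul_assoc, ← Real.exp_add]
  refine mul_le_mul_of_nonneg_left (Real.exp_le_exp.mpr ?_) hA
  have hlog_T : Real.log T.det = Real.log ((4 * π / k : ℝ) • T * Y).det -
      n * (Real.log (4 * π) - Real.log k) - Real.log Y.det := by linarith
  rw [show -2 * (π * (T * Y).trace) = -(2 * π * (T * Y).trace) by ring, htrace, hlog_T]
  linarith

theorem det_rpow_mul_exp_neg_steinLoss_le {κ : ℝ} (hβ : 4 * |β| ≤ κ) (hT : T.PosDef)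
    (hY : Y.PosDef) :
    (T * Y).det ^ (-β) * Real.exp (-(κ / 2 * steinLoss (T * Y))) ≤
      Real.exp (n * |β|) * Real.exp (-(κ / 4 * steinLoss (T * Y))) := by
  have hdet : 0 < (T * Y).det := Matrix.det_mul T Y ▸ mul_pos hT.det_pos hY.det_pos
  have hloss : |β| * steinLoss (T * Y) ≤ κ / 4 * steinLoss (T * Y) :=
    mul_le_mul_of_nonneg_right (by linarith) (steinLoss_mul_nonneg hT hY)
  have hlog : Real.log (T * Y).det * -β ≤ (steinLoss (T * Y) + n) * |β| := by
    calc Real.log (T * Y).det * -β ≤ |Real.log (T * Y).det| * |β| := by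
          rw [← abs_neg β, ← abs_mul]
          exact le_abs_self _
      _ ≤ _ := by
          gcongr
          simpa using abs_log_det_mul_le_steinLoss_add_card hT hY
  rw [Real.rpow_def_of_pos hdet, ← Real.exp_add, ← Real.exp_add]
  exact Real.exp_le_exp.mpr (by linarith)

theorem qk_le_mul_tsum_exp_neg_steinLoss (hk : k ≠ 0) (hkβ : 4 * |β| ≤ k) (hA : 0 ≤ A)
    {p : Lambda n → ℝ} (hp : Admissible n k α β A p) (hY : Y.PosDef) :
    qk n k p Y ≤
      ENNReal.ofReal (A * (4 * π) ^ (n * β) * Real.exp (n * |β|) *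
        (((k : ℝ) ^ n / Y.det) ^ (-β) * (k : ℝ) ^ ((n : ℝ) / 4 + α))) *
      ∑' T : Lambda n,
        ENNReal.ofReal (Real.exp (-((k : ℝ) / 4 * steinLoss ((4 * π / k : ℝ) • T.1 * Y)))) := by
  have hdet := hY.det_pos
  rw [qk, ← ENNReal.tsum_mul_left]
  refine ENNReal.tsum_le_tsum fun T => ?_
  rw [← ENNReal.ofReal_mul (by positivity)]
  refine ENNReal.ofReal_le_ofReal ?_
  have hT : ((4 * π / k : ℝ) • T.1).PosDef := T.2.1.smul (by positivity)
  calc _ ≤ _ := by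
        gcongr
        exact hp.2 T
    _ ≤ _ := admissible_term_le hk hA T.2.1 hY
    _ ≤ A * (4 * π) ^ (n * β) *
          (((k : ℝ) ^ n / Y.det) ^ (-β) * (k : ℝ) ^ ((n : ℝ) / 4 + α)) *
          (Real.exp (n * |β|) *
            Real.exp (-(k / 4 * steinLoss ((4 * π / k : ℝ) • T.1 * Y)))) := by
        gcongr ?_ * ?_
        exact det_rpow_mul_exp_neg_steinLoss_le hkβ hT hY
    _ = _ := by ring

end TermBound

section Absorption

variable {ι : Type*} [Fintype ι] [DecidableEq ι]

theorem exists_det_rpow_le_mul_exp_trace (M : ℝ) {c : ℝ} (hc : 0 < c) :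
    ∃ C : ℝ, 0 < C ∧ ∀ Y : Matrix ι ι ℝ, Y.PosSemidef → (∀ i, 1 ≤ Y i i) → 1 ≤ Y.det →
      Y.det ^ M ≤ C * Real.exp (c * Y.trace) := by
  obtain ⟨C, hC, hexp⟩ := exists_rpow_le_mul_exp |M| hc
  refine ⟨C ^ Fintype.card ι, by positivity, fun Y hY hdiag hdet => ?_⟩
  calc Y.det ^ M ≤ Y.det ^ |M| := Real.rpow_le_rpow_of_exponent_le hdet (le_abs_self M)
    _ ≤ (∏ i, Y i i) ^ |M| := by
        gcongr
        exact det_le_prod_diag_of_posSemidef hY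
    _ = ∏ i, Y i i ^ |M| := (Real.finsetProd_rpow _ _ (fun i _ => hY.diag_nonneg) _).symm
    _ ≤ ∏ i, C * Real.exp (c * Y i i) := Finset.prod_le_prod
        (fun i _ => Real.rpow_nonneg hY.diag_nonneg _) fun i _ => hexp (hdiag i)
    _ = C ^ Fintype.card ι * Real.exp (c * Y.trace) := by
        rw [Finset.prod_mul_distrib, ← Real.exp_sum, ← Finset.mul_sum, Finset.prod_const,
          Finset.card_univ]
        rfl

theorem exists_div_det_rpow_mul_exp_neg_le (m : ℕ) (b s t : ℝ) {δ c : ℝ} (hδ : 0 < δ)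
    (hc : 0 < c) :
    ∃ C : ℝ, 0 < C ∧ ∀ (k : ℝ) (Y : Matrix ι ι ℝ), 1 ≤ k → Y.PosSemidef → (∀ i, 1 ≤ Y i i) →
      1 ≤ Y.det →
      (k ^ m / Y.det) ^ b * k ^ s * (Real.exp (-(δ * k)) * Real.exp (-(c * Y.trace))) ≤
        C * (Real.exp (-(δ / 2) * k) * Y.det ^ t) := by
  obtain ⟨C₁, hC₁, hk_pow⟩ := exists_rpow_le_mul_exp (m * b + s) (half_pos hδ)
  obtain ⟨C₂, hC₂, hdet_pow⟩ := exists_det_rpow_le_mul_exp_trace (ι := ι) (-b - t) hc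
  refine ⟨C₁ * C₂, mul_pos hC₁ hC₂, fun k Y hk hY hdiag hdet => ?_⟩
  have hk_pos : 0 < k := by positivity
  have hdet_pos : 0 < Y.det := by positivity
  have hsplit : (k ^ m / Y.det) ^ b * k ^ s = k ^ (m * b + s) * (Y.det ^ (-b - t) * Y.det ^ t) := by
    rw [Real.div_rpow (pow_nonneg hk_pos.le m) hdet_pos.le, ← Real.rpow_natCast_mul hk_pos.le,
      Real.rpow_add hk_pos, ← Real.rpow_add hdet_pos, sub_add_cancel, Real.rpow_neg hdet_pos.le]
    ring
  have hexp_k : Real.exp (δ / 2 * k) * Real.exp (-(δ * k)) = Real.exp (-(δ / 2) * k) := by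
    rw [← Real.exp_add]
    ring_nf
  have hexp_trace : Real.exp (c * Y.trace) * Real.exp (-(c * Y.trace)) = 1 := by
    rw [← Real.exp_add, add_neg_cancel, Real.exp_zero]
  calc _ ≤ C₁ * Real.exp (δ / 2 * k) * (C₂ * Real.exp (c * Y.trace) * Y.det ^ t) *
        (Real.exp (-(δ * k)) * Real.exp (-(c * Y.trace))) := by
        rw [hsplit]
        gcongr
        exacts [hk_pow hk, hdet_pow Y hY hdiag hdet]
    _ = C₁ * C₂ * (Real.exp (δ / 2 * k) * Real.exp (-(δ * k)) * Y.det ^ t) *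
        (Real.exp (c * Y.trace) * Real.exp (-(c * Y.trace))) := by ring
    _ = _ := by rw [hexp_k, hexp_trace]; ring

theorem exists_div_det_rpow_mul_add_exp_neg_le (m : ℕ) (b e s t : ℝ) {δ c : ℝ} (hδ : 0 < δ)
    (hc : 0 < c) :
    ∃ C : ℝ, 0 < C ∧ ∀ (k : ℝ) (Y : Matrix ι ι ℝ), 1 ≤ k → Y.PosSemidef → (∀ i, 1 ≤ Y i i) →
      1 ≤ Y.det →
      (k ^ m / Y.det) ^ b * k ^ s *
          ((k ^ m / Y.det) ^ e + Real.exp (-(δ * k)) * Real.exp (-(c * Y.trace))) ≤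
        C * ((k ^ m / Y.det) ^ (e + b) * k ^ s + Real.exp (-(δ / 2) * k) * Y.det ^ t) := by
  obtain ⟨C, hC, habsorb⟩ := exists_div_det_rpow_mul_exp_neg_le (ι := ι) m b s t hδ hc
  refine ⟨1 + C, by positivity, fun k Y hk hY hdiag hdet => ?_⟩
  have hratio : 0 < k ^ m / Y.det := by positivity
  have hmain : 0 ≤ (k ^ m / Y.det) ^ (e + b) * k ^ s := by positivity
  have hrest : 0 ≤ Real.exp (-(δ / 2) * k) * Y.det ^ t := by positivity
  have h := habsorb k Y hk hY hdiag hdet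
  rw [mul_add, mul_right_comm, ← Real.rpow_add hratio, add_comm b e]
  linarith [mul_nonneg hC.le hmain]

end Absorption

theorem posDef_of_one_loewnerLE {n : ℕ} {Y : Matrix (Fin n) (Fin n) ℝ} (h : LoewnerLE 1 Y) :
    Y.PosDef :=
  sub_add_cancel Y 1 ▸ Matrix.PosDef.posSemidef_add h Matrix.PosDef.one

theorem one_le_diag_of_one_loewnerLE {n : ℕ} {Y : Matrix (Fin n) (Fin n) ℝ}
    (h : LoewnerLE 1 Y) (i : Fin n) : 1 ≤ Y i i := by
  simpa using Matrix.PosSemidef.diag_nonneg h (i := i)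

theorem one_le_det_of_one_loewnerLE {n : ℕ} {Y : Matrix (Fin n) (Fin n) ℝ}
    (h : LoewnerLE 1 Y) : 1 ≤ Y.det :=
  sub_add_cancel Y 1 ▸ one_le_det_add_one_of_posSemidef h

theorem statement6_general {n : ℕ} {r : ℝ} (α β : ℝ) {A : ℝ} (hr : 0 < r) (hA : 0 < A) :
    ∃ C : ℝ, 0 < C ∧ ∃ c₀ : ℝ, 0 < c₀ ∧ ∃ k₀ : ℕ, ∀ k : ℕ, k₀ ≤ k →
      ∀ p : Lambda n → ℝ, Admissible n k α β A p →
      ∀ Y : Matrix (Fin n) (Fin n) ℝ, LoewnerLE (r⁻¹ • diagPart Y) Y → LoewnerLE 1 Y →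
        qk n k p Y ≤ ENNReal.ofReal
          (C * (((k : ℝ) ^ n / Y.det) ^ (((n : ℝ) + 1) / 4 - β) *
              (k : ℝ) ^ ((n : ℝ) / 4 + α) +
            Real.exp (-c₀ * k) * Y.det ^ (-((n : ℝ) + 1) / 2))) := by
  obtain ⟨C₁, hC₁, δ, hδ, c, hc, hcentral⟩ := exists_tsum_exp_neg_steinLoss_le n hr
  obtain ⟨C₂, hC₂, habsorb⟩ := exists_div_det_rpow_mul_add_exp_neg_le (ι := Fin n) n (-β)
    (((n : ℝ) + 1) / 4) ((n : ℝ) / 4 + α) (-((n : ℝ) + 1) / 2) hδ hc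
  set B := A * (4 * π) ^ (n * β) * Real.exp (n * |β|) with hB
  refine ⟨B * C₁ * C₂, by positivity, δ / 2, half_pos hδ, max 1 ⌈4 * |β|⌉₊,
    fun k hk p hp Y hred hone => ?_⟩
  have hk_one : 1 ≤ k := le_of_max_le_left hk
  have hkβ : 4 * |β| ≤ k := Nat.ceil_le.mp (le_of_max_le_right hk)
  have hY := posDef_of_one_loewnerLE hone
  have hdiag := one_le_diag_of_one_loewnerLE hone
  have hdet := one_le_det_of_one_loewnerLE hone
  grw [qk_le_mul_tsum_exp_neg_steinLoss (by positivity) hkβ hA.le hp hY, ← hB,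
    hcentral k Y (by positivity) hY hdiag hred, ← ENNReal.ofReal_mul (by positivity)]
  refine ENNReal.ofReal_le_ofReal ?_
  rw [mul_mul_mul_comm, mul_assoc (B * C₁)]
  exact mul_le_mul_of_nonneg_left
    (habsorb k Y (by exact_mod_cast hk_one) hY.posSemidef hdiag hdet) (by positivity)

theorem mul_rpow_add_exp_neg_mul_le {a b c k s ε : ℝ} (ha : 0 ≤ a) (hb : 0 ≤ b) (hc : 0 ≤ c)
    (hk : 1 ≤ k) (hε : ε ∈ Set.Icc (0 : ℝ) 1) :
    a * k ^ s + Real.exp (-c * k) * b ≤ a * k ^ (s + ε) + Real.exp (-c * k ^ ε) * b := by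
  have hpow : k ^ s ≤ k ^ (s + ε) :=
    Real.rpow_le_rpow_of_exponent_le hk (le_add_of_nonneg_right hε.1)
  have hexp : -c * k ≤ -c * k ^ ε :=
    mul_le_mul_of_nonpos_left (Real.rpow_le_self_of_one_le hk hε.2) (neg_nonpos.mpr hc)
  gcongr

theorem statement6 {n : ℕ} (hn : 1 ≤ n) (r ε α β A : ℝ) (hr : 1 ≤ r)
    (hε : ε ∈ Set.Ioo (0 : ℝ) 1) (hA : 0 < A) :
    ∃ C : ℝ, 0 < C ∧ ∃ c₀ : ℝ, 0 < c₀ ∧ ∃ k₀ : ℕ, ∀ k : ℕ, k₀ ≤ k →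
      ∀ p : Lambda n → ℝ, Admissible n k α β A p →
      ∀ Y : Matrix (Fin n) (Fin n) ℝ, MinkReduced r Y → LoewnerLE 1 Y →
        qk n k p Y ≤ ENNReal.ofReal
          (C * (((k : ℝ) ^ n / Y.det) ^ (((n : ℝ) + 1) / 4 - β) *
              (k : ℝ) ^ ((n : ℝ) / 4 + α + ε) +
            Real.exp (-c₀ * (k : ℝ) ^ ε) * Y.det ^ (-((n : ℝ) + 1) / 2))) := by
  obtain ⟨C, hC, c₀, hc₀, k₀, hbound⟩ :=
    statement6_general (n := n) α β (zero_lt_one.trans_le hr) hA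
  exact ⟨C, hC, c₀, hc₀, max k₀ 1, fun k hk p hp Y hY hone =>
    (hbound k (le_of_max_le_left hk) p hp Y hY.2.1 hone).trans <| ENNReal.ofReal_le_ofReal <|
      mul_le_mul_of_nonneg_left (mul_rpow_add_exp_neg_mul_le
        (Real.rpow_nonneg (div_nonneg (by positivity) hY.1.det_pos.le) _)
        (Real.rpow_nonneg hY.1.det_pos.le _) hc₀.le (by exact_mod_cast le_of_max_le_right hk)
        (Set.Ioo_subset_Icc_self hε)) hC.le⟩
end
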